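/- arXiv:2103.08858 — 10 statements merged into one kernel-verified Lean document; each statement's English description precedes it below -/
import Mathlib

section
/- For any finite field 𝔽_q of odd characteristic, any integer n ≥ 1, any multiplicative characters A₁,…,Aₙ₊₁, B₂,…,Bₙ₊₁ of 𝔽_q^×, and any λ ∈ 𝔽_q, the period function satisfies ₙ₊₁ℙₙ(A₁,…,Aₙ₊₁; B₂,…,Bₙ₊₁; λ; q) = ((−1)^{n+1}/(q−1)) · (∏_{i=2}^{n+1} (AᵢBᵢ)(−1)) · ∑_{χ} binom(A₁χ, χ) · binom(A₂χ, B₂χ) ⋯ binom(Aₙ₊₁χ, Bₙ₊₁χ) · χ(λ) + δ(λ) · ∏_{i=2}^{n+1} J(Aᵢ, ĀᵢBᵢ), where the sum runs over all multiplicative characters χ of 𝔽_q^×. -/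
/-- Auxiliary to `periodP`: peels off the *first* pair of the list. -/
noncomputable def periodPAux {F : Type*} [Field F] [Fintype F]
    (A₁ : MulChar F ℂ) : List (MulChar F ℂ × MulChar F ℂ) → F → ℂ
  | [], lam => A₁⁻¹ (1 - lam)
  | p :: rest, lam => ∑ x : F, p.1 x * (p.1⁻¹ * p.2) (1 - x) * periodPAux A₁ rest (lam * x)

/-- `periodP A₁ [(A₂,B₂),…,(Aₙ₊₁,Bₙ₊₁)] λ` is the finite-field period function
`ₙ₊₁ℙₙ(A₁,…,Aₙ₊₁; B₂,…,Bₙ₊₁; λ; q)`: it is defined inductively by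
`₁ℙ₀(A₁;λ) = A₁⁻¹(1-λ)` and
`ₙ₊₁ℙₙ(A₁,…,Aₙ₊₁;B₂,…,Bₙ₊₁;λ) = ∑ₓ Aₙ₊₁(x)·(Aₙ₊₁⁻¹Bₙ₊₁)(1-x)·ₙℙₙ₋₁(A₁,…,Aₙ;B₂,…,Bₙ;λx)`,
the sum being over `x ∈ 𝔽_q`.  (Multiplicative characters are extended by `A(0)=0`,
which is automatic for `MulChar`.) -/
noncomputable def periodP {F : Type*} [Field F] [Fintype F]
    (A₁ : MulChar F ℂ) (l : List (MulChar F ℂ × MulChar F ℂ)) (lam : F) : ℂ :=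
  periodPAux A₁ l.reverse lam

/-- The complex-valued quadratic character `φ` of a finite field. -/
noncomputable def quadChar (F : Type*) [Field F] [Fintype F] [DecidableEq F] : MulChar F ℂ :=
  (quadraticChar F).ringHomComp (Int.castRingHom ℂ)

/-- The finite-field binomial coefficient `binom(A,B) = -B(-1)·J(A,B̄)`. -/
noncomputable def binomC {F : Type*} [Field F] [Fintype F] (A B : MulChar F ℂ) : ℂ :=
  -(B (-1)) * jacobiSum A B⁻¹

open Finset in
theorem aux_orth {F : Type*} [Field F] [Fintype F] [DecidableEq F]
    [Fintype (MulChar F ℂ)] (a : F) :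
    ∑ χ : MulChar F ℂ, χ a = if a = 1 then (Fintype.card F : ℂ) - 1 else 0 := by
  split_ifs with h
  · subst h
    simp only [map_one, sum_const, card_univ, nsmul_eq_mul, mul_one]
    have h1 := MulChar.card_eq_card_units_of_hasEnoughRootsOfUnity F ℂ
    rw [Nat.card_eq_fintype_card, Nat.card_eq_fintype_card, Fintype.card_units] at h1
    rw [h1, Nat.cast_sub Fintype.card_pos]
    simp
  · obtain ⟨ψ, hψ⟩ := MulChar.exists_apply_ne_one_of_hasEnoughRootsOfUnity F ℂ h
    have h2 : ψ a * ∑ χ : MulChar F ℂ, χ a = ∑ χ : MulChar F ℂ, χ a := by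
      rw [mul_sum]
      exact Fintype.sum_equiv (Equiv.mulLeft ψ) _ _ (fun χ => by simp)
    have h3 : (ψ a - 1) * ∑ χ : MulChar F ℂ, χ a = 0 := by
      rw [sub_mul, h2, one_mul, sub_self]
    exact (mul_eq_zero.mp h3).resolve_left (sub_ne_zero.mpr hψ)

theorem aux_inv {F : Type*} [Field F] (χ : MulChar F ℂ) (a : F) : χ⁻¹ a = χ a⁻¹ :=
  MulChar.inv_apply' χ a

theorem aux_jac {F : Type*} [Field F] [Fintype F] [DecidableEq F] (A B : MulChar F ℂ) :
    jacobiSum A B = A (-1) * jacobiSum A (A * B)⁻¹ := by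
  unfold jacobiSum
  rw [Finset.mul_sum]
  have key : ∀ t : F, t ≠ 1 → A t * B (1 - t)
      = A (-1) * (A (t / (t - 1)) * (A * B)⁻¹ (1 - t / (t - 1))) := by
    intro t ht
    have h1 : t - 1 ≠ 0 := sub_ne_zero.mpr ht
    have h2 : 1 - t ≠ 0 := sub_ne_zero.mpr (Ne.symm ht)
    have e : (1 - t / (t - 1))⁻¹ = 1 - t := by
      have : 1 - t / (t - 1) = (1 - t)⁻¹ := by field_simp; ring
      rw [this, inv_inv]
    rw [aux_inv, e, MulChar.mul_apply, ← mul_assoc, ← mul_assoc, ← map_mul, ← map_mul]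
    congr 2
    field_simp
    ring
  have hinv : ∀ t : F, t ≠ 1 → t / (t - 1) ≠ 1 ∧ t / (t - 1) / (t / (t - 1) - 1) = t := by
    intro t ht
    have h1 : t - 1 ≠ 0 := sub_ne_zero.mpr ht
    have h3 : t / (t - 1) - 1 = (t - 1)⁻¹ := by field_simp; ring
    constructor
    · intro h
      rw [h, sub_self] at h3
      exact inv_ne_zero h1 h3.symm
    · rw [h3]; field_simp
  rw [← Finset.sum_erase (a := (1 : F)) Finset.univ (by simp [MulChar.map_zero]),
    ← Finset.sum_erase (a := (1 : F)) (f := fun x => A (-1) * (A x * (A * B)⁻¹ (1 - x)))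
      Finset.univ (by simp [MulChar.map_zero])]
  refine Finset.sum_bij' (fun t _ => t / (t - 1)) (fun t _ => t / (t - 1)) ?_ ?_ ?_ ?_ ?_
  · intro t ht; simpa using (hinv t (by simpa using ht)).1
  · intro t ht; simpa using (hinv t (by simpa using ht)).1
  · intro t ht; exact (hinv t (by simpa using ht)).2
  · intro t ht; exact (hinv t (by simpa using ht)).2
  · intro t ht; exact key t (by simpa using ht)

theorem aux_base {F : Type*} [Field F] [Fintype F] [DecidableEq F]
    [Fintype (MulChar F ℂ)] (A : MulChar F ℂ) (lam : F) :
    ∑ χ : MulChar F ℂ, χ (-1) * jacobiSum (A * χ) χ⁻¹ * χ lam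
      = ((Fintype.card F : ℂ) - 1) * (A⁻¹ (1 - lam) - if lam = 0 then 1 else 0) := by
  have h1 : ∑ χ : MulChar F ℂ, χ (-1) * jacobiSum (A * χ) χ⁻¹ * χ lam
      = ∑ t : F, A t * ∑ χ : MulChar F ℂ, χ (-1 * t * (1 - t)⁻¹ * lam) := by
    simp only [jacobiSum, Finset.mul_sum, Finset.sum_mul]
    rw [Finset.sum_comm]
    refine Finset.sum_congr rfl fun t _ => Finset.sum_congr rfl fun χ _ => ?_
    rw [aux_inv, MulChar.mul_apply, map_mul, map_mul, map_mul]
    ring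
  rw [h1]
  simp only [aux_orth]
  by_cases h0 : lam = 0
  · subst h0; simp
  have hiff : ∀ t : F, (-1 * t * (1 - t)⁻¹ * lam = 1) ↔ (lam ≠ 1 ∧ t = (1 - lam)⁻¹) := by
    intro t
    by_cases ht : 1 - t = 0
    · have : t = 1 := (sub_eq_zero.mp ht).symm
      subst this
      simp only [sub_self, inv_zero, mul_zero, zero_mul, zero_ne_one, false_iff, not_and]
      intro _ h
      have : 1 - lam = 1 := by rw [← inv_inv (1 - lam), ← h, inv_one]
      exact h0 (by linear_combination -this)
    · have e : (-1 * t * (1 - t)⁻¹ * lam = 1) ↔ t * (1 - lam) = 1 := by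
        rw [show -1 * t * (1 - t)⁻¹ * lam = (-1 * t * lam) / (1 - t) by ring, div_eq_one_iff_eq ht]
        constructor <;> intro h <;> linear_combination h
      rw [e]
      constructor
      · intro h
        refine ⟨fun h' => ?_, eq_inv_of_mul_eq_one_left h⟩
        rw [h'] at h; simp at h
      · rintro ⟨h, rfl⟩
        exact inv_mul_cancel₀ (sub_ne_zero.mpr (Ne.symm h))
  simp only [hiff, h0, if_false, sub_zero]
  by_cases hl : lam = 1
  · subst hl; simp [MulChar.map_zero]
  · simp [hl, aux_inv, mul_comm]

theorem aux_list {F : Type*} [Field F] [Fintype F] [DecidableEq F]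
    [Fintype (MulChar F ℂ)] (A : MulChar F ℂ) (l : List (MulChar F ℂ × MulChar F ℂ)) :
    ∀ lam : F, periodPAux A l lam = 1 / ((Fintype.card F : ℂ) - 1) *
      (∑ χ : MulChar F ℂ, χ (-1) * jacobiSum (A * χ) χ⁻¹ *
        (l.map fun p => jacobiSum (p.1 * χ) (p.1⁻¹ * p.2)).prod * χ lam)
      + (if lam = 0 then (1 : ℂ) else 0) *
        (l.map fun p => jacobiSum p.1 (p.1⁻¹ * p.2)).prod := by
  have hq : (Fintype.card F : ℂ) - 1 ≠ 0 := by
    have : (1 : ℕ) < Fintype.card F := Fintype.one_lt_card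
    rw [sub_ne_zero]; exact_mod_cast this.ne'
  induction l with
  | nil =>
    intro lam
    simp only [periodPAux, List.map_nil, List.prod_nil, mul_one, aux_base]
    field_simp
    ring
  | cons p l ih =>
    intro lam
    simp only [periodPAux, ih, List.map_cons, List.prod_cons, mul_add, Finset.sum_add_distrib]
    congr 1
    · simp only [Finset.mul_sum]
      rw [Finset.sum_comm]
      refine Finset.sum_congr rfl fun χ _ => ?_
      rw [show jacobiSum (p.1 * χ) (p.1⁻¹ * p.2) = ∑ x : F, (p.1 * χ) x * (p.1⁻¹ * p.2) (1 - x) from rfl]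
      simp only [Finset.mul_sum, Finset.sum_mul]
      refine Finset.sum_congr rfl fun x _ => ?_
      rw [map_mul, MulChar.mul_apply p.1 χ]
      ring
    · by_cases h0 : lam = 0
      · subst h0
        simp [jacobiSum, Finset.sum_mul]
      · simp only [h0, mul_eq_zero, false_or, if_false, zero_mul]
        refine Finset.sum_eq_zero fun x _ => ?_
        by_cases hx : x = 0
        · subst hx; simp [MulChar.map_zero]
        · simp [hx]

theorem statement0 {F : Type*} [Field F] [Fintype F] [DecidableEq F]
    [Fintype (MulChar F ℂ)]
    (hodd : ringChar F ≠ 2) (n : ℕ) (hn : 1 ≤ n)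
    (A : Fin (n + 1) → MulChar F ℂ) (B : Fin n → MulChar F ℂ) (lam : F) :
    periodP (A 0) (List.ofFn fun i : Fin n => (A i.succ, B i)) lam
      = ((-1) ^ (n + 1) / ((Fintype.card F : ℂ) - 1))
          * (∏ i : Fin n, (A i.succ * B i) (-1))
          * (∑ χ : MulChar F ℂ,
              binomC (A 0 * χ) χ * (∏ i : Fin n, binomC (A i.succ * χ) (B i * χ)) * χ lam)
        + (if lam = 0 then (1 : ℂ) else 0)
            * ∏ i : Fin n, jacobiSum (A i.succ) ((A i.succ)⁻¹ * B i) := by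
  unfold periodP
  rw [aux_list]
  simp only [List.map_reverse, List.prod_reverse, List.map_ofFn, List.prod_ofFn,
    Function.comp_apply]
  congr 1
  rw [div_mul_eq_mul_div, div_mul_eq_mul_div, div_mul_eq_mul_div, one_mul]
  congr 1
  rw [Finset.mul_sum]
  refine Finset.sum_congr rfl fun χ _ => ?_
  have key : ∀ i : Fin n, jacobiSum (A i.succ * χ) ((A i.succ)⁻¹ * B i)
      = -1 * (A i.succ * B i) (-1) * binomC (A i.succ * χ) (B i * χ) := by
    intro i
    have hb : B i (-1) * B i (-1) = 1 := by rw [← map_mul]; simp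
    rw [aux_jac, binomC]
    have : A i.succ * χ * ((A i.succ)⁻¹ * B i) = B i * χ := by
      rw [mul_mul_mul_comm, mul_inv_cancel, one_mul, mul_comm]
    rw [this]
    simp only [MulChar.mul_apply]
    linear_combination (-(A i.succ (-1) * χ (-1) * jacobiSum (A i.succ * χ) (B i * χ)⁻¹)) * hb
  simp only [key, Finset.prod_mul_distrib, Finset.prod_const, Finset.card_univ, Fintype.card_fin]
  rw [binomC, pow_succ]
  ring
end

section
/- For any finite field 𝔽_q of odd characteristic, any multiplicative characters A₁,…,Aₙ, B₂,…,Bₙ of 𝔽_q^×, and any t ∈ 𝔽_q with t ≠ 0, one has ₙℙₙ₋₁(A₁,A₂,…,Aₙ; B₂,…,Bₙ; 1/t; q) = A₁(−t)·(∏_{i=2}^{n} (AᵢBᵢ)(−1))·ₙℙₙ₋₁(A₁, A₁B̄₂,…,A₁B̄ₙ; A₁Ā₂,…,A₁Āₙ; t; q), and this also equals A₂(t)·(∏_{i=3}^{n} (AᵢBᵢ)(−1))·ₙℙₙ₋₁(A₂B̄₂, A₂, A₂B̄₃,…,A₂B̄ₙ; A₂Ā₁, A₂Ā₃,…,A₂Āₙ;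 t; q). -/
lemma step_aux {F : Type*} [Field F] [Fintype F] (f g : F → ℂ) (c : ℂ) (C A B : MulChar F ℂ)
    (h : ∀ s : F, s ≠ 0 → f s⁻¹ = c * C s * g s) (t : F) (ht : t ≠ 0) :
    ∑ x : F, A x * (A⁻¹ * B) (1 - x) * f (t⁻¹ * x)
      = c * (A * B) (-1) * C t *
        ∑ x : F, (C * B⁻¹) x * ((C * B⁻¹)⁻¹ * (C * A⁻¹)) (1 - x) * g (t * x) := by
  rw [Finset.mul_sum, ← Equiv.sum_comp (Equiv.inv F)]
  refine Finset.sum_congr rfl fun x _ => ?_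
  have e : (C * B⁻¹)⁻¹ * (C * A⁻¹) = A⁻¹ * B := by
    rw [mul_inv, inv_inv]
    calc C⁻¹ * B * (C * A⁻¹) = (C⁻¹ * C) * (A⁻¹ * B) := by
          ac_rfl
      _ = _ := by simp
  rw [e]
  simp only [Equiv.inv_apply]
  by_cases hx : x = 0
  · subst hx
    have h1 : A (0 : F) = 0 := MulChar.map_zero A
    have h2 : (C * B⁻¹) (0 : F) = 0 := MulChar.map_zero _
    simp [h1, h2]
  have hf : f (t⁻¹ * x⁻¹) = c * C (t * x) * g (t * x) := by
    rw [← h (t * x) (mul_ne_zero ht hx), mul_inv]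
  have h1 : (1 : F) - x⁻¹ = (-1) * ((1 - x) * x⁻¹) := by field_simp; ring
  have h2 : A⁻¹ (-1 : F) = A (-1) := by
    rw [MulChar.inv_apply']; norm_num
  have h3 : A x * A x⁻¹ = 1 := by
    rw [← map_mul, mul_inv_cancel₀ hx, map_one]
  rw [hf, h1]
  simp only [map_mul, MulChar.mul_apply, h2]
  rw [MulChar.inv_apply' B x, MulChar.inv_apply' A x⁻¹, inv_inv]
  linear_combination (A (-1) * B (-1) * A⁻¹ (1 - x) * B (1 - x) * B x⁻¹ * c * C t * C x * g (t * x)) * h3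

lemma aux_one {F : Type*} [Field F] [Fintype F] (A₁ : MulChar F ℂ)
    (l : List (MulChar F ℂ × MulChar F ℂ)) : ∀ t : F, t ≠ 0 →
    periodPAux A₁ l t⁻¹ = (A₁ (-1) * (l.map fun p => (p.1 * p.2) (-1)).prod) * A₁ t *
      periodPAux A₁ (l.map fun p => (A₁ * p.2⁻¹, A₁ * p.1⁻¹)) t := by
  induction l with
  | nil =>
    intro t ht
    have h1 : (1 : F) - t⁻¹ = (-1) * ((1 - t) * t⁻¹) := by field_simp; ring
    have h2 : A₁⁻¹ (-1 : F) = A₁ (-1) := by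
      rw [MulChar.inv_apply']; norm_num
    simp only [periodPAux, List.map_nil, List.prod_nil]
    rw [h1]
    simp only [map_mul, h2]
    rw [MulChar.inv_apply' A₁ t⁻¹, inv_inv]
    ring
  | cons p l ih =>
    intro t ht
    simp only [periodPAux, List.map_cons, List.prod_cons]
    rw [step_aux _ _ _ A₁ p.1 p.2 ih t ht]
    ring

lemma aux_two {F : Type*} [Field F] [Fintype F] (A₁ A₂ B₂ : MulChar F ℂ)
    (l : List (MulChar F ℂ × MulChar F ℂ)) : ∀ t : F, t ≠ 0 →
    periodPAux A₁ (l ++ [(A₂, B₂)]) t⁻¹ = (l.map fun p => (p.1 * p.2) (-1)).prod * A₂ t *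
      periodPAux (A₂ * B₂⁻¹)
        ((l.map fun p => (A₂ * p.2⁻¹, A₂ * p.1⁻¹)) ++ [(A₂, A₂ * A₁⁻¹)]) t := by
  induction l with
  | nil =>
    intro t ht
    simp only [periodPAux, List.map_nil, List.prod_nil, List.nil_append]
    rw [Finset.mul_sum, ← Equiv.sum_comp (Equiv.mulLeft₀ t ht)]
    refine Finset.sum_congr rfl fun x _ => ?_
    have e1 : A₂⁻¹ * (A₂ * A₁⁻¹) = A₁⁻¹ := by simp
    have e2 : (A₂ * B₂⁻¹)⁻¹ = A₂⁻¹ * B₂ := by rw [mul_inv, inv_inv]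
    rw [e1, e2]
    simp only [Equiv.mulLeft₀_apply, inv_mul_cancel_left₀ ht, map_mul]
    ring
  | cons p l ih =>
    intro t ht
    simp only [periodPAux, List.map_cons, List.prod_cons, List.cons_append]
    rw [step_aux _ _ _ A₂ p.1 p.2 ih t ht]
    ring

/-- Kummer-type transformation for the period function `ₙℙₙ₋₁` (with `n = m + 2`):
the upper characters are `A₁, A₂, A 0, …, A (m-1)` (playing the roles of
`A₁, A₂, A₃, …, Aₙ`) and the lower ones are `B₂, B 0, …, B (m-1)`
(playing the roles of `B₂, B₃, …, Bₙ`). -/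
theorem statement1 {F : Type*} [Field F] [Fintype F] (hodd : ringChar F ≠ 2)
    (m : ℕ) (A₁ A₂ B₂ : MulChar F ℂ) (A B : Fin m → MulChar F ℂ) (t : F) (ht : t ≠ 0) :
    (periodP A₁ ((A₂, B₂) :: List.ofFn fun i => (A i, B i)) t⁻¹
        = A₁ (-t) * ((A₂ * B₂) (-1) * ∏ i, (A i * B i) (-1))
            * periodP A₁
                ((A₁ * B₂⁻¹, A₁ * A₂⁻¹) :: List.ofFn fun i => (A₁ * (B i)⁻¹, A₁ * (A i)⁻¹)) t)
    ∧ (periodP A₁ ((A₂, B₂) :: List.ofFn fun i => (A i, B i)) t⁻¹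
        = A₂ t * (∏ i, (A i * B i) (-1))
            * periodP (A₂ * B₂⁻¹)
                ((A₂, A₂ * A₁⁻¹) :: List.ofFn fun i => (A₂ * (B i)⁻¹, A₂ * (A i)⁻¹)) t) := by
  have hneg : A₁ (-t) = A₁ (-1) * A₁ t := by rw [← map_mul]; simp
  constructor
  · unfold periodP
    rw [aux_one A₁ _ t ht, hneg]
    simp only [List.map_reverse, List.prod_reverse, List.map_cons, List.prod_cons, List.map_ofFn,
      List.prod_ofFn, Function.comp_def]
    ring
  · unfold periodP
    simp only [List.reverse_cons]
    rw [aux_two A₁ A₂ B₂ _ t ht]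
    simp only [List.map_reverse, List.prod_reverse, List.map_ofFn,
      List.prod_ofFn, Function.comp_def]
    ring
end

section
/- Let 𝔽_q be a finite field of odd characteristic and let η, K, S be multiplicative characters of 𝔽_q^× such that none of η, Kφ, ηK, ηK̄ is trivial and ηK = S². Then for every t ∈ 𝔽_q with t ≠ 0 and t ≠ 1, one has ₃ℙ₂(φ, η, η̄; K, K̄; t; q) = φ(1−t)·( ₂ℙ₁(φKS̄, S; K; t; q) · ₂ℙ₁(φK̄S, S̄; K̄; t; q) − q ). -/
section Helpers
set_option linter.unusedSectionVars false
variable {F : Type*} [Field F] [Fintype F] [DecidableEq F]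

lemma chi_inv (χ : MulChar F ℂ) (a : F) : χ a⁻¹ = (χ a)⁻¹ := by
  rw [← MulChar.inv_apply', MulChar.inv_apply_eq_inv']

lemma chi_div (χ : MulChar F ℂ) (a b : F) : χ (a / b) = χ a / χ b := by
  rw [div_eq_mul_inv, map_mul, chi_inv, div_eq_mul_inv]

lemma chi_ne (χ : MulChar F ℂ) {a : F} (h : a ≠ 0) : χ a ≠ 0 := by
  intro h0
  have h2 : χ (a * a⁻¹) = 0 := by rw [map_mul, h0, zero_mul]
  rw [mul_inv_cancel₀ h, map_one] at h2
  exact one_ne_zero h2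

lemma chi_zero (χ : MulChar F ℂ) : χ 0 = 0 := MulChar.map_zero χ

lemma phi_def (a : F) : quadChar F a = ((quadraticChar F a : ℤ) : ℂ) := by
  simp [quadChar, MulChar.ringHomComp_apply]

lemma phi_sq {a : F} (h : a ≠ 0) : quadChar F a * quadChar F a = 1 := by
  rw [phi_def]
  have := quadraticChar_sq_one h
  rw [pow_two] at this
  exact_mod_cast this

lemma phi_mulsq {a : F} (b : F) (h : a ≠ 0) : quadChar F (a ^ 2 * b) = quadChar F b := by
  rw [map_mul, pow_two, map_mul, phi_sq h, one_mul]

lemma phi_inv_fun (a : F) : (quadChar F a)⁻¹ = quadChar F a := by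
  by_cases h : a = 0
  · simp [h, chi_zero]
  · exact inv_eq_of_mul_eq_one_left (phi_sq h)

lemma phi_inv : (quadChar F)⁻¹ = quadChar F := by
  ext a
  rw [MulChar.inv_apply_eq_inv', phi_inv_fun]

lemma phi_ne_one (hodd : ringChar F ≠ 2) : quadChar F ≠ 1 := by
  obtain ⟨a, ha⟩ := quadraticChar_exists_neg_one hodd
  intro h
  have h1 := phi_def a
  rw [ha, h] at h1
  have h0 : a ≠ 0 := by rintro rfl; simp at ha
  rw [MulChar.one_apply h0.isUnit] at h1
  norm_num at h1

lemma card_sqrt (hodd : ringChar F ≠ 2) (a : F) :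
    ((Finset.univ.filter (fun x : F => x ^ 2 = a)).card : ℂ) = 1 + quadChar F a := by
  have := quadraticChar_card_sqrts hodd a
  rw [phi_def, add_comm]
  rw [Set.toFinset_ofPred] at this
  exact_mod_cast this

lemma sum_ne_one {χ : MulChar F ℂ} (h : χ ≠ 1) :
    ∑ x : F, (if x = 1 then 0 else χ x) = -1 := by
  have h1 := MulChar.sum_eq_zero_of_ne_one h
  have h2 : ∑ x : F, (if x = 1 then 0 else χ x) = ∑ x : F, (χ x - if x = 1 then 1 else 0) := by
    refine Finset.sum_congr rfl fun x _ => ?_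
    split_ifs with hx
    · simp [hx]
    · simp
  rw [h2, Finset.sum_sub_distrib, h1]
  simp

lemma diag_sum (hodd : ringChar F ≠ 2) {t : F} (ht0 : t ≠ 0) :
    ∑ x : F, quadChar F (1 - t * x ^ 2) = - quadChar F (-t) := by
  have e1 : ∑ x : F, quadChar F (1 - t * x ^ 2)
      = ∑ a : F, ∑ x ∈ Finset.univ.filter (fun x : F => x ^ 2 = a), quadChar F (1 - t * x ^ 2) :=
    (Finset.sum_fiberwise _ _ _).symm
  have e2 : ∀ a : F, ∑ x ∈ Finset.univ.filter (fun x : F => x ^ 2 = a), quadChar F (1 - t * x ^ 2)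
      = quadChar F (1 - t * a) + quadChar F a * quadChar F (1 - t * a) := by
    intro a
    rw [Finset.sum_congr rfl (g := fun _ => quadChar F (1 - t * a))]
    · rw [Finset.sum_const, nsmul_eq_mul, card_sqrt hodd]; ring
    · intro x hx
      rw [(Finset.mem_filter.mp hx).2]
  rw [e1, Finset.sum_congr rfl (fun a _ => e2 a), Finset.sum_add_distrib]
  have e3 : ∑ a : F, quadChar F (1 - t * a) = ∑ a : F, quadChar F a := by
    refine Finset.sum_bij' (fun a _ => 1 - t * a) (fun b _ => (1 - b) / t) ?_ ?_ ?_ ?_ ?_ <;>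
      intros <;> (try simp) <;> field_simp <;> ring
  have e4 : ∑ a : F, quadChar F a * quadChar F (1 - t * a)
      = quadChar F t * jacobiSum (quadChar F) (quadChar F)⁻¹ := by
    rw [jacobiSum, Finset.mul_sum, phi_inv]
    refine Finset.sum_bij' (fun a _ => t * a) (fun b _ => b / t) ?_ ?_ ?_ ?_ ?_
    · intros; simp
    · intros; simp
    · intros; field_simp
    · intros; field_simp
    · intro a _
      rw [map_mul, ← mul_assoc, ← mul_assoc, phi_sq ht0, one_mul]
  rw [e3, e4, MulChar.sum_eq_zero_of_ne_one (phi_ne_one hodd),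
    jacobiSum_nontrivial_inv (phi_ne_one hodd), neg_eq_neg_one_mul t, map_mul]
  ring

/-- the full sum -/
lemma full_uv (hodd : ringChar F ≠ 2) (η K : MulChar F ℂ) (hη : η ≠ 1)
    (hKφ : K * quadChar F ≠ 1) (hηK' : η * K⁻¹ ≠ 1) {t : F} (ht0 : t ≠ 0) :
    ∑ x : F, ∑ y : F, (η⁻¹ x * (η * K⁻¹) (1 - x)) * (η y * (η⁻¹ * K) (1 - y) *
        quadChar F (1 - t * x * y))
      = ∑ u : F, ∑ v : F, η u * K v * quadChar F (v * (v * (1 - u) ^ 2 - t * u * (v - 1) ^ 2)) := by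
  have hR : ∀ u v : F, η u * K v * quadChar F (v * (v * (1 - u) ^ 2 - t * u * (v - 1) ^ 2))
      = (if u ≠ 0 ∧ v ≠ 0 ∧ u ≠ 1 ∧ v ≠ 1 ∧ u * v ≠ 1 then
          η u * K v * quadChar F (v * (v * (1 - u) ^ 2 - t * u * (v - 1) ^ 2)) else 0)
        + (if u = 1 then quadChar F (-t) * (if v = 1 then 0 else (K * quadChar F) v) else 0)
        + (if v = 1 then (if u = 1 then 0 else η u) else 0)
        + (if v = u⁻¹ then quadChar F (1 - t) * (if u = 1 then 0 else (η * K⁻¹) u) else 0) := by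
    intro u v
    by_cases hu : u = 0
    · subst hu
      simp [chi_zero]
    by_cases hv : v = 0
    · subst hv
      simp [chi_zero, hu, Ne.symm hu]
    by_cases hu1 : u = 1
    · subst hu1
      by_cases hv1 : v = 1
      · subst hv1
        simp [chi_zero]
      · have : v * (v * (1 - 1) ^ 2 - t * 1 * (v - 1) ^ 2) = (v - 1) ^ 2 * (-t * v) := by ring
        rw [this, phi_mulsq _ (sub_ne_zero.mpr hv1), map_mul]
        simp [hv1]
        ring
    by_cases hv1 : v = 1
    · subst hv1
      have : (1 : F) * (1 * (1 - u) ^ 2 - t * u * (1 - 1) ^ 2) = (1 - u) ^ 2 * 1 := by ring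
      rw [this, phi_mulsq _ (sub_ne_zero.mpr (Ne.symm hu1))]
      have h1 : ¬ (1 = u⁻¹) := fun h => hu1 (by rw [← inv_inv u, ← h, inv_one])
      simp [hu1, h1]
    by_cases huv : v = u⁻¹
    · subst huv
      have : u⁻¹ * (u⁻¹ * (1 - u) ^ 2 - t * u * (u⁻¹ - 1) ^ 2) = ((1 - u) / u) ^ 2 * (1 - t) := by
        field_simp
      rw [this, phi_mulsq _ (div_ne_zero (sub_ne_zero.mpr (Ne.symm hu1)) hu)]
      simp [hu, hu1, MulChar.inv_apply', chi_inv]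
      ring
    · have h2 : u * v ≠ 1 := fun h => huv (eq_inv_of_mul_eq_one_right h)
      simp [hu, hv, hu1, hv1, huv, h2]
  have hL : ∀ x y : F, (η⁻¹ x * (η * K⁻¹) (1 - x)) * (η y * (η⁻¹ * K) (1 - y) *
        quadChar F (1 - t * x * y))
      = (if x ≠ 0 ∧ y ≠ 0 ∧ x ≠ 1 ∧ y ≠ 1 ∧ x ≠ y then
         (η⁻¹ x * (η * K⁻¹) (1 - x)) * (η y * (η⁻¹ * K) (1 - y) *
        quadChar F (1 - t * x * y)) else 0)
       + (if y = x then (quadChar F (1 - t * x ^ 2) - (if x = 0 then 1 else 0)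
          - (if x = 1 then quadChar F (1 - t) else 0)) else 0) := by
    intro x y
    by_cases hx : x = 0
    · subst hx
      simp [chi_zero]
    by_cases hx1 : x = 1
    · subst hx1
      simp [chi_zero]
    by_cases hy : y = 0
    · subst hy
      simp [chi_zero, Ne.symm hx]
    by_cases hy1 : y = 1
    · subst hy1
      simp [chi_zero, Ne.symm hx1]
    by_cases hxy : y = x
    · subst hxy
      have a1 := chi_ne η hx
      have a2 := chi_ne η (sub_ne_zero.mpr (Ne.symm hx1))
      have a3 := chi_ne K (sub_ne_zero.mpr (Ne.symm hx1))
      have : t * y * y = t * y ^ 2 := by ring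
      rw [this]
      simp [hx, hx1, MulChar.inv_apply_eq_inv']
      field_simp
    · simp [hx, hx1, hy, hy1, hxy, Ne.symm hxy]
  have hR' : ∑ u : F, ∑ v : F,
      η u * K v * quadChar F (v * (v * (1 - u) ^ 2 - t * u * (v - 1) ^ 2))
      = ∑ u : F, ∑ v : F, (if u ≠ 0 ∧ v ≠ 0 ∧ u ≠ 1 ∧ v ≠ 1 ∧ u * v ≠ 1 then
          η u * K v * quadChar F (v * (v * (1 - u) ^ 2 - t * u * (v - 1) ^ 2)) else 0)
       - quadChar F (-t) - 1 - quadChar F (1 - t) := by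
    rw [Finset.sum_congr rfl (fun u _ => Finset.sum_congr rfl (fun v _ => hR u v))]
    simp only [Finset.sum_add_distrib]
    have s1 : ∑ u : F, ∑ v : F, (if u = 1 then quadChar F (-t) *
        (if v = 1 then 0 else (K * quadChar F) v) else 0) = - quadChar F (-t) := by
      rw [Finset.sum_comm]
      simp only [Finset.sum_ite_eq', Finset.mem_univ, if_true]
      rw [← Finset.mul_sum, sum_ne_one hKφ]; ring
    have s2 : ∑ u : F, ∑ v : F, (if v = 1 then (if u = 1 then 0 else η u) else 0) = -1 := by
      simp only [Finset.sum_ite_eq', Finset.mem_univ, if_true]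
      rw [sum_ne_one hη]
    have s3 : ∑ u : F, ∑ v : F, (if v = u⁻¹ then quadChar F (1 - t) *
        (if u = 1 then 0 else (η * K⁻¹) u) else 0) = - quadChar F (1 - t) := by
      simp only [Finset.sum_ite_eq', Finset.mem_univ, if_true]
      rw [← Finset.mul_sum, sum_ne_one hηK']; ring
    rw [s1, s2, s3]; ring
  have hL' : ∑ x : F, ∑ y : F, (η⁻¹ x * (η * K⁻¹) (1 - x)) * (η y * (η⁻¹ * K) (1 - y) *
        quadChar F (1 - t * x * y))
      = ∑ x : F, ∑ y : F, (if x ≠ 0 ∧ y ≠ 0 ∧ x ≠ 1 ∧ y ≠ 1 ∧ x ≠ y then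
         (η⁻¹ x * (η * K⁻¹) (1 - x)) * (η y * (η⁻¹ * K) (1 - y) *
        quadChar F (1 - t * x * y)) else 0)
       - quadChar F (-t) - 1 - quadChar F (1 - t) := by
    rw [Finset.sum_congr rfl (fun x _ => Finset.sum_congr rfl (fun y _ => hL x y))]
    simp only [Finset.sum_add_distrib]
    have s1 : ∑ x : F, ∑ y : F, (if y = x then (quadChar F (1 - t * x ^ 2) - (if x = 0 then 1 else 0)
          - (if x = 1 then quadChar F (1 - t) else 0)) else 0)
        = - quadChar F (-t) - 1 - quadChar F (1 - t) := by
      simp only [Finset.sum_ite_eq', Finset.mem_univ, if_true, Finset.sum_sub_distrib]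
      rw [diag_sum hodd ht0]
    rw [s1]; ring
  rw [hL', hR']
  congr 3
  rw [← Finset.sum_product', ← Finset.sum_product', ← Finset.sum_filter, ← Finset.sum_filter]
  refine Finset.sum_bij'
    (fun p _ => (p.2 * (1 - p.1) / (p.1 * (1 - p.2)), (1 - p.2) / (1 - p.1)))
    (fun p _ => ((p.2 - 1) / (p.2 * (1 - p.1)), p.1 * (p.2 - 1) / (1 - p.1))) ?_ ?_ ?_ ?_ ?_
  · rintro ⟨x, y⟩ h
    simp only [Finset.mem_filter, Finset.mem_product, Finset.mem_univ, true_and] at h ⊢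
    obtain ⟨hx, hy, hx1, hy1, hxy⟩ := h
    have hx1' := sub_ne_zero.mpr (Ne.symm hx1)
    have hy1' := sub_ne_zero.mpr (Ne.symm hy1)
    refine ⟨by positivity, by positivity, ?_, ?_, ?_⟩
    · intro h; rw [div_eq_one_iff_eq (by positivity)] at h; apply hxy; linear_combination -h
    · intro h; rw [div_eq_one_iff_eq (by positivity)] at h; apply hxy; linear_combination h
    · intro h; field_simp at h; exact hxy h.symm
  · rintro ⟨u, v⟩ h
    simp only [Finset.mem_filter, Finset.mem_product, Finset.mem_univ, true_and] at h ⊢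
    obtain ⟨hu, hv, hu1, hv1, huv⟩ := h
    have hu1' := sub_ne_zero.mpr (Ne.symm hu1)
    have hv1' := sub_ne_zero.mpr hv1
    refine ⟨by positivity, by positivity, ?_, ?_, ?_⟩
    · intro h; rw [div_eq_one_iff_eq (by positivity)] at h; apply huv; linear_combination h
    · intro h; rw [div_eq_one_iff_eq (by positivity)] at h; apply huv; linear_combination h
    · intro h
      field_simp at h
      apply huv; linear_combination -h
  · rintro ⟨x, y⟩ h
    simp only [Finset.mem_filter, Finset.mem_product, Finset.mem_univ, true_and] at h ⊢
    obtain ⟨hx, hy, hx1, hy1, hxy⟩ := h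
    have hx1' := sub_ne_zero.mpr (Ne.symm hx1)
    have hy1' := sub_ne_zero.mpr (Ne.symm hy1)
    have hxy' := sub_ne_zero.mpr hxy
    have e1 : 1 - y * (1 - x) / (x * (1 - y)) = (x - y) / (x * (1 - y)) := by
      field_simp; ring
    have e2 : (1 - y) / (1 - x) - 1 = (x - y) / (1 - x) := by
      field_simp; ring
    rw [e1, e2]
    ext
    · field_simp
    · field_simp
  · rintro ⟨u, v⟩ h
    simp only [Finset.mem_filter, Finset.mem_product, Finset.mem_univ, true_and] at h ⊢
    obtain ⟨hu, hv, hu1, hv1, huv⟩ := h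
    have hu1' := sub_ne_zero.mpr (Ne.symm hu1)
    have hv1' := sub_ne_zero.mpr hv1
    have huv' := sub_ne_zero.mpr (Ne.symm huv)
    have e1 : 1 - (v - 1) / (v * (1 - u)) = (1 - u * v) / (v * (1 - u)) := by
      field_simp; ring
    have e2 : 1 - u * (v - 1) / (1 - u) = (1 - u * v) / (1 - u) := by
      field_simp; ring
    rw [e1, e2]
    ext
    · field_simp
    · field_simp
  · rintro ⟨x, y⟩ h
    simp only [Finset.mem_filter, Finset.mem_product, Finset.mem_univ, true_and] at h ⊢
    obtain ⟨hx, hy, hx1, hy1, hxy⟩ := h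
    have hx1' := sub_ne_zero.mpr (Ne.symm hx1)
    have hy1' := sub_ne_zero.mpr (Ne.symm hy1)
    have hxy' := sub_ne_zero.mpr hxy
    have e : (1 - y) / (1 - x) * ((1 - y) / (1 - x) * (1 - y * (1 - x) / (x * (1 - y))) ^ 2
        - t * (y * (1 - x) / (x * (1 - y))) * ((1 - y) / (1 - x) - 1) ^ 2)
        = ((x - y) / (x * (1 - x))) ^ 2 * (1 - t * x * y) := by
      field_simp; ring
    rw [e, phi_mulsq _ (by positivity)]
    simp only [MulChar.mul_apply, MulChar.inv_apply_eq_inv', chi_div, map_mul]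
    have a1 := chi_ne η hx
    have a2 := chi_ne η hx1'
    have a3 := chi_ne K hx1'
    have a4 := chi_ne η hy1'
    field_simp


lemma prod_lemma (S K : MulChar F ℂ) {t : F} (ht1 : t ≠ 1) :
    ∑ x : F, S x * (S⁻¹ * K) (1 - x) * (quadChar F * K * S⁻¹)⁻¹ (1 - t * x)
      = quadChar F (1 - t) * ∑ w : F, S (1 - w) * (S⁻¹ * K) w * (quadChar F * S⁻¹) (1 - t * w) := by
  have ht1' := sub_ne_zero.mpr (Ne.symm ht1)
  rw [Finset.mul_sum]
  have hl : ∀ x : F, S x * (S⁻¹ * K) (1 - x) * (quadChar F * K * S⁻¹)⁻¹ (1 - t * x)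
     = if 1 - t * x ≠ 0 then S x * (S⁻¹ * K) (1 - x) * (quadChar F * K * S⁻¹)⁻¹ (1 - t * x) else 0 := by
    intro x
    split_ifs with h
    · rfl
    · rw [not_not.mp h, chi_zero, mul_zero]
  have hr : ∀ w : F, quadChar F (1 - t) * (S (1 - w) * (S⁻¹ * K) w * (quadChar F * S⁻¹) (1 - t * w))
     = if 1 - t * w ≠ 0 then
      quadChar F (1 - t) * (S (1 - w) * (S⁻¹ * K) w * (quadChar F * S⁻¹) (1 - t * w)) else 0 := by
    intro x
    split_ifs with h
    · rfl
    · rw [not_not.mp h, chi_zero, mul_zero, mul_zero]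
  rw [Finset.sum_congr rfl (fun x _ => hl x), Finset.sum_congr rfl (fun x _ => hr x),
    ← Finset.sum_filter, ← Finset.sum_filter]
  have k1 : ∀ x : F, 1 - t * x ≠ 0 → 1 - t * ((1 - x) / (1 - t * x)) = (1 - t) / (1 - t * x) := by
    intro x hx; field_simp; ring
  have k2 : ∀ x : F, 1 - t * x ≠ 0 → 1 - ((1 - x) / (1 - t * x)) = x * (1 - t) / (1 - t * x) := by
    intro x hx
    rw [eq_div_iff hx, sub_mul, div_mul_cancel₀ _ hx]; ring
  have m1 : ∀ x ∈ Finset.univ.filter (fun x : F => 1 - t * x ≠ 0), (1 - x) / (1 - t * x) ∈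
      Finset.univ.filter (fun x : F => 1 - t * x ≠ 0) := by
    intro x hx
    simp only [Finset.mem_filter, Finset.mem_univ, true_and] at hx ⊢
    rw [k1 x hx]
    exact div_ne_zero ht1' hx
  have m2 : ∀ x ∈ Finset.univ.filter (fun x : F => 1 - t * x ≠ 0),
      (1 - (1 - x) / (1 - t * x)) / (1 - t * ((1 - x) / (1 - t * x))) = x := by
    intro x hx
    simp only [Finset.mem_filter, Finset.mem_univ, true_and] at hx
    rw [k1 x hx, k2 x hx, div_div_div_cancel_right₀ hx, mul_div_cancel_right₀ _ ht1']
  refine Finset.sum_bij' (fun x _ => (1 - x) / (1 - t * x)) (fun x _ => (1 - x) / (1 - t * x))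
    m1 m1 m2 m2 ?_
  intro x hx
  simp only [Finset.mem_filter, Finset.mem_univ, true_and] at hx
  rw [k1 x hx, k2 x hx]
  simp only [MulChar.mul_apply, MulChar.inv_apply_eq_inv', chi_div, map_mul, mul_inv, inv_inv,
    phi_inv_fun]
  have a1 := chi_ne S ht1'
  have a2 := chi_ne S hx
  have a3 := chi_ne K hx
  have a4 := phi_sq ht1'
  calc S x * ((S (1 - x))⁻¹ * K (1 - x)) * (quadChar F (1 - t * x) * (K (1 - t * x))⁻¹ * S (1 - t * x))
      = (quadChar F (1 - t) * quadChar F (1 - t)) * (S x * ((S (1 - x))⁻¹ * K (1 - x)) *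
        (quadChar F (1 - t * x) * (K (1 - t * x))⁻¹ * S (1 - t * x))) := by rw [a4, one_mul]
    _ = _ := by
      rw [div_eq_mul_inv (quadChar F _), phi_inv_fun]
      field_simp

/-- argument of S -/
def Aarg (t B z : F) : F := (1 - B * z) * (1 - t * z) / (B * (1 - z) * (1 - t * B * z))

/-- the polynomial P -/
def Pp (t B u : F) : F := B * (1 - u) ^ 2 - t * (u * B - 1) ^ 2

/-- the quadratic -/
def Qd (t B A z : F) : F :=
  (1 - A * B) * (t * B) * z ^ 2 - (B + t - A * B - A * B * (t * B)) * z + (1 - A * B)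

lemma Qd_eq (t B A z : F) :
    Qd t B A z = (1 - B * z) * (1 - t * z) - A * (B * (1 - z) * (1 - t * B * z)) := by
  unfold Qd; ring

lemma Qd_nz {t B A z : F} (ht0 : t ≠ 0) (ht1 : t ≠ 1) (hB : B ≠ 0) (hB1 : B ≠ 1) (hA : A ≠ 0)
    (hAB : A * B ≠ 1) (h : Qd t B A z = 0) :
    z ≠ 0 ∧ 1 - z ≠ 0 ∧ 1 - t * B * z ≠ 0 ∧ 1 - t * z ≠ 0 ∧ 1 - B * z ≠ 0 ∧ Aarg t B z = A := by
  have ht1' := sub_ne_zero.mpr (Ne.symm ht1)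
  have hB1' := sub_ne_zero.mpr (Ne.symm hB1)
  have hAB' := sub_ne_zero.mpr (Ne.symm hAB)
  rw [Qd_eq] at h
  have h0 : z ≠ 0 := by
    rintro rfl
    apply hAB'; linear_combination h
  have h1 : 1 - z ≠ 0 := by
    intro hz
    have : z = 1 := by linear_combination -hz
    subst this
    apply mul_ne_zero hB1' ht1'; linear_combination h
  have h2 : 1 - t * B * z ≠ 0 := by
    intro hz
    have : t * B * ((1 - B * z) * (1 - t * z)) = 0 := by linear_combination t * B * h + t * B * A * B * (1 - z) * hz
    apply mul_ne_zero (mul_ne_zero hB ht1') hB1'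
    rw [hz] at h
    have h3 : t * ((1 - B * z)) * (B * (1 - t * z)) = 0 := by linear_combination this
    have h4 : t * (1 - B * z) = t - 1 := by linear_combination hz
    have h5 : B * (1 - t * z) = B - 1 := by linear_combination hz
    rw [h4, h5] at h3
    linear_combination B * h3
  have h3 : 1 - t * z ≠ 0 := by
    intro hz
    rw [hz] at h
    have h5 : A * B * (1 - z) * (1 - t * B * z) = 0 := by linear_combination -h
    exact mul_ne_zero (mul_ne_zero (mul_ne_zero hA hB) h1) h2 h5
  have h4 : 1 - B * z ≠ 0 := by
    intro hz
    rw [hz] at h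
    have h5 : A * B * (1 - z) * (1 - t * B * z) = 0 := by linear_combination -h
    exact mul_ne_zero (mul_ne_zero (mul_ne_zero hA hB) h1) h2 h5
  refine ⟨h0, h1, h2, h3, h4, ?_⟩
  unfold Aarg
  rw [div_eq_iff (by positivity)]
  linear_combination h

lemma Qd_conv {t B A z : F} (hB : B ≠ 0) (hA : A ≠ 0) (h : Aarg t B z = A) : Qd t B A z = 0 := by
  have hd : B * (1 - z) * (1 - t * B * z) ≠ 0 := by
    intro hd
    unfold Aarg at h
    rw [hd, div_zero] at h
    exact hA h.symm
  unfold Aarg at h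
  rw [div_eq_iff hd] at h
  rw [Qd_eq]; linear_combination h

/-- weights -/
noncomputable def wt (t B z : F) : ℂ := quadChar F ((1 - t * z) * (1 - t * B * z))

lemma W_nonsq {t B A : F} (ht0 : t ≠ 0) (ht1 : t ≠ 1) (hB : B ≠ 0) (hB1 : B ≠ 1) (hA : A ≠ 0)
    (hAB : A * B ≠ 1) (hns : quadChar F A = -1) :
    ∑ z ∈ Finset.univ.filter (fun z : F => Qd t B A z = 0), wt t B z = 0 := by
  have key : ∑ z ∈ Finset.univ.filter (fun z : F => Qd t B A z = 0), wt t B z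
      = ∑ z ∈ Finset.univ.filter (fun z : F => Qd t B A z = 0), - wt t B z := by
    have m1 : ∀ z ∈ Finset.univ.filter (fun z : F => Qd t B A z = 0), 1 / (t * B * z) ∈
        Finset.univ.filter (fun z : F => Qd t B A z = 0) := by
      intro z hz
      simp only [Finset.mem_filter, Finset.mem_univ, true_and] at hz ⊢
      obtain ⟨h0, -⟩ := Qd_nz ht0 ht1 hB hB1 hA hAB hz
      have : Qd t B A (1 / (t * B * z)) = Qd t B A z / (t * B * z ^ 2) := by
        unfold Qd; field_simp; ring
      rw [this, hz, zero_div]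
    have m2 : ∀ z ∈ Finset.univ.filter (fun z : F => Qd t B A z = 0),
        1 / (t * B * (1 / (t * B * z))) = z := by
      intro z hz
      simp only [Finset.mem_filter, Finset.mem_univ, true_and] at hz
      obtain ⟨h0, -⟩ := Qd_nz ht0 ht1 hB hB1 hA hAB hz
      field_simp
    refine Finset.sum_bij' (fun z _ => 1 / (t * B * z)) (fun z _ => 1 / (t * B * z))
      m1 m1 m2 m2 ?_
    intro z hz
    simp only [Finset.mem_filter, Finset.mem_univ, true_and] at hz
    obtain ⟨h0, h1, h2, h3, h4, h5⟩ := Qd_nz ht0 ht1 hB hB1 hA hAB hz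
    rw [Qd_eq] at hz
    unfold wt
    have e1 : (1 - t * (1 / (t * B * z))) * (1 - t * B * (1 / (t * B * z)))
        = A * (((1 - z) * (1 - t * B * z)) / (z * (1 - t * z) )) ^ 2 * ((1 - t * z) / (1 - t * B * z)) := by
      field_simp
      have : (1 - B * z) * (1 - t * z) = A * (B * (1 - z) * (1 - t * B * z)) := by linear_combination hz
      linear_combination (1 - z) * this
    have e2 : (1 - t * z) * (1 - t * B * z) = (1 - t * B * z) ^ 2 * ((1 - t * z) / (1 - t * B * z)) := by
      field_simp
    rw [e1, e2, phi_mulsq _ h2, mul_comm A, mul_assoc (_ ^ 2) A, phi_mulsq _ (by positivity), map_mul, hns]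
    ring
  rw [Finset.sum_neg_distrib] at key
  exact self_eq_neg.mp key

lemma W_sq_aux (hodd : ringChar F ≠ 2) {t B u : F} (ht0 : t ≠ 0) (ht1 : t ≠ 1) (hB : B ≠ 0)
    (hB1 : B ≠ 1) (hu : u ≠ 0) (hAB : u ^ 2 * B ≠ 1) (hP : Pp t B u ≠ 0) :
    ∑ z ∈ Finset.univ.filter (fun z : F => Qd t B (u ^ 2) z = 0), wt t B z
      = quadChar F (1 - t) * (quadChar F (B * Pp t B u) + quadChar F (B * Pp t B (-u))) := by
  have h2 : (2 : F) ≠ 0 := Ring.two_ne_zero hodd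
  have ht1' := sub_ne_zero.mpr (Ne.symm ht1)
  have hs := sub_ne_zero.mpr (Ne.symm hAB)
  set P := Pp t B u with hPd
  set Q := Pp t B (-u) with hQd
  set s := 1 - u ^ 2 * B with hsd
  set m := B + t - u ^ 2 * B - u ^ 2 * B * (t * B) with hm
  have hwt : ∀ z ∈ Finset.univ.filter (fun z : F => Qd t B (u ^ 2) z = 0),
      wt t B z = quadChar F (1 - t) * quadChar F (B * P) := by
    intro z hz
    simp only [Finset.mem_filter, Finset.mem_univ, true_and] at hz
    obtain ⟨h0, -, h3, h4, -⟩ := Qd_nz ht0 ht1 hB hB1 (pow_ne_zero 2 hu) hAB hz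
    unfold wt
    have hw : (1 - t * z) * (1 - t * B * z) ≠ 0 := mul_ne_zero h4 h3
    have e : ((1 + u * B) * P - (1 - u * B) * (2 * s * t * B * z - m)) ^ 2 * (1 - t)
        = (2 * s) ^ 2 * (((1 - t * z) * (1 - t * B * z)) * (B * P)) := by
      simp only [hPd, hsd, hm, Pp]
      unfold Qd at hz
      linear_combination ((1 - t) * (1 - u * B) ^ 2 * 4 * (1 - u ^ 2 * B) * t * B
        - 4 * (1 - u ^ 2 * B) * B * t * (B * (1 - u) ^ 2 - t * (u * B - 1) ^ 2)) * hz
    have hne : ((1 + u * B) * P - (1 - u * B) * (2 * s * t * B * z - m)) ≠ 0 := by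
      intro h
      rw [h] at e
      have : (2 * s) ^ 2 * (((1 - t * z) * (1 - t * B * z)) * (B * P)) ≠ 0 := by positivity
      apply this; rw [← e]; ring
    have e' := congrArg (quadChar F) e
    rw [phi_mulsq _ hne, phi_mulsq _ (mul_ne_zero h2 hs), map_mul _ _ (B * P)] at e'
    rw [e', mul_assoc (quadChar F _), phi_sq (mul_ne_zero hB hP), mul_one]
  rw [Finset.sum_congr rfl hwt, Finset.sum_const, nsmul_eq_mul]
  have hc : (Finset.univ.filter (fun z : F => Qd t B (u ^ 2) z = 0)).card
      = (Finset.univ.filter (fun d : F => d ^ 2 = P * Q)).card := by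
    have hid : ∀ z, (2 * s * t * B * z - m) ^ 2 - P * Q = 4 * s * t * B * Qd t B (u ^ 2) z := by
      intro z
      simp only [hPd, hQd, hsd, hm, Pp, Qd]; ring
    refine Finset.card_bij' (fun z _ => 2 * s * t * B * z - m)
      (fun d _ => (d + m) / (2 * s * t * B)) ?_ ?_ ?_ ?_
    · intro z hz
      simp only [Finset.mem_filter, Finset.mem_univ, true_and] at hz ⊢
      have := hid z
      rw [hz] at this
      linear_combination this
    · intro d hd
      simp only [Finset.mem_filter, Finset.mem_univ, true_and] at hd ⊢
      have := hid ((d + m) / (2 * s * t * B))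
      have e : 2 * s * t * B * ((d + m) / (2 * s * t * B)) - m = d := by
        field_simp; ring
      rw [e, hd, sub_self] at this
      have h4 : 4 * s * t * B ≠ 0 := by
        have : (4 : F) = 2 * 2 := by norm_num
        rw [this]; positivity
      exact (mul_eq_zero.mp this.symm).resolve_left h4
    · intro z hz
      field_simp; ring
    · intro d hd
      field_simp; ring
  rw [hc, card_sqrt hodd]
  simp only [map_mul]
  have := phi_sq hP
  linear_combination quadChar F (1 - t) * quadChar F B * quadChar F Q * this

lemma W_sq (hodd : ringChar F ≠ 2) {t B u : F} (ht0 : t ≠ 0) (ht1 : t ≠ 1) (hB : B ≠ 0)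
    (hB1 : B ≠ 1) (hu : u ≠ 0) (hAB : u ^ 2 * B ≠ 1) :
    ∑ z ∈ Finset.univ.filter (fun z : F => Qd t B (u ^ 2) z = 0), wt t B z
      = quadChar F (1 - t) * (quadChar F (B * Pp t B u) + quadChar F (B * Pp t B (-u))) := by
  by_cases hP : Pp t B u = 0
  · by_cases hQ : Pp t B (-u) = 0
    · exfalso
      have h2 : (2 : F) ≠ 0 := Ring.two_ne_zero hodd
      have hB1' := sub_ne_zero.mpr hB1
      have hs := sub_ne_zero.mpr (Ne.symm hAB)
      unfold Pp at hP hQ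
      have : B * (2 * 2 * u * (B - 1) * (1 - u ^ 2 * B)) = 0 := by
        linear_combination (u * B + 1) ^ 2 * hP - (u * B - 1) ^ 2 * hQ
      revert this
      positivity
    · have := W_sq_aux (u := -u) hodd ht0 ht1 hB hB1 (neg_ne_zero.mpr hu) (by simpa using hAB) hQ
      rw [neg_neg, neg_sq] at this
      rw [this]; ring
  · exact W_sq_aux hodd ht0 ht1 hB hB1 hu hAB hP

/-- Fixed-B identity, B ≠ 1. -/
lemma fixed_B (hodd : ringChar F ≠ 2) (S : MulChar F ℂ) {t B : F} (ht0 : t ≠ 0) (ht1 : t ≠ 1)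
    (hB : B ≠ 0) (hB1 : B ≠ 1) :
    quadChar F (1 - t) * ∑ u : F, S (u ^ 2) * quadChar F (B * Pp t B u)
      = (∑ z : F, if z = 0 then 0 else S (Aarg t B z) * wt t B z)
        + S B⁻¹ * (1 + quadChar F B) := by
  have ht1' := sub_ne_zero.mpr (Ne.symm ht1)
  have e1 : ∑ u : F, S (u ^ 2) * quadChar F (B * Pp t B u)
      = ∑ A : F, S A * ∑ u ∈ Finset.univ.filter (fun u : F => u ^ 2 = A),
          quadChar F (B * Pp t B u) := by
    rw [← Finset.sum_fiberwise Finset.univ (fun u : F => u ^ 2)]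
    refine Finset.sum_congr rfl fun A _ => ?_
    rw [Finset.mul_sum]
    refine Finset.sum_congr rfl fun u hu => ?_
    rw [(Finset.mem_filter.mp hu).2]
  have e2 : (∑ z : F, if z = 0 then 0 else S (Aarg t B z) * wt t B z)
      = ∑ A : F, S A * ∑ z ∈ Finset.univ.filter (fun z : F => Aarg t B z = A),
          if z = 0 then 0 else wt t B z := by
    rw [← Finset.sum_fiberwise Finset.univ (fun z : F => Aarg t B z)]
    refine Finset.sum_congr rfl fun A _ => ?_
    rw [Finset.mul_sum]
    refine Finset.sum_congr rfl fun z hz => ?_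
    rw [(Finset.mem_filter.mp hz).2]
    split_ifs <;> simp
  have e3 : S B⁻¹ * (1 + quadChar F B)
      = ∑ A : F, S A * (if A = B⁻¹ then 1 + quadChar F B else 0) := by
    simp
  rw [e1, e2, e3, Finset.mul_sum, ← Finset.sum_add_distrib]
  refine Finset.sum_congr rfl fun A _ => ?_
  by_cases hA : A = 0
  · simp [hA, chi_zero]
  rw [← mul_add, mul_left_comm]
  congr 1
  by_cases hAB : A = B⁻¹
  · subst hAB
    rw [if_pos rfl, Finset.sum_congr rfl (g := fun _ => quadChar F (1 - t)), Finset.sum_const,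
      nsmul_eq_mul, card_sqrt hodd, chi_inv, phi_inv_fun, mul_left_comm, phi_sq ht1', mul_one,
      Finset.sum_eq_zero, zero_add]
    · intro z hz
      have hz := Qd_conv hB hA (Finset.mem_filter.mp hz).2
      unfold Qd at hz
      rw [inv_mul_cancel₀ hB] at hz
      have h : (B - 1) * (1 - t) * z = 0 := by linear_combination -hz
      have hz0 := (mul_eq_zero.mp h).resolve_left (mul_ne_zero (sub_ne_zero.mpr hB1) ht1')
      rw [if_pos hz0]
    · intro u hu
      have hu := (Finset.mem_filter.mp hu).2
      have hu' : u ^ 2 * B = 1 := by rw [hu, inv_mul_cancel₀ hB]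
      have hu1 : 1 - u ≠ 0 := by
        intro h
        have : u = 1 := by linear_combination -h
        subst this
        apply hB1; linear_combination hu'
      have : B * Pp t B u = (B * (1 - u)) ^ 2 * (1 - t) := by
        unfold Pp
        linear_combination (t * B - t * B ^ 2) * hu'
      rw [this, phi_mulsq _ (mul_ne_zero hB hu1)]
  · rw [if_neg hAB, add_zero]
    have hAB' : A * B ≠ 1 := fun h => hAB (eq_inv_of_mul_eq_one_left h)
    have hs : ∑ z ∈ Finset.univ.filter (fun z : F => Aarg t B z = A), (if z = 0 then 0 else wt t B z)
        = ∑ z ∈ Finset.univ.filter (fun z : F => Qd t B A z = 0), wt t B z := by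
      refine Finset.sum_congr ?_ ?_
      · ext z
        simp only [Finset.mem_filter, Finset.mem_univ, true_and]
        exact ⟨fun h => Qd_conv hB hA h, fun h => (Qd_nz ht0 ht1 hB hB1 hA hAB' h).2.2.2.2.2⟩
      · intro z hz
        rw [if_neg (Qd_nz ht0 ht1 hB hB1 hA hAB' (Finset.mem_filter.mp hz).2).1]
    rw [hs]
    by_cases hsq : ∃ u : F, u ^ 2 = A
    · obtain ⟨u, rfl⟩ := hsq
      have hu : u ≠ 0 := fun h => hA (by rw [h]; ring)
      rw [W_sq hodd ht0 ht1 hB hB1 hu hAB']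
      have h2 : (2 : F) ≠ 0 := Ring.two_ne_zero hodd
      have hne : u ≠ -u := by
        intro h
        apply mul_ne_zero h2 hu; linear_combination h
      have : Finset.univ.filter (fun x : F => x ^ 2 = u ^ 2) = {u, -u} := by
        ext x
        simp [sq_eq_sq_iff_eq_or_eq_neg]
      rw [this, Finset.sum_pair hne]
    · have hemp : Finset.univ.filter (fun u : F => u ^ 2 = A) = ∅ := by
        ext x
        simp only [Finset.mem_filter, Finset.mem_univ, true_and, Finset.notMem_empty, iff_false]
        exact fun h => hsq ⟨x, h⟩
      have hns : quadChar F A = -1 := by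
        have := card_sqrt hodd A
        rw [hemp] at this
        simp at this
        linear_combination -this
      rw [W_nonsq ht0 ht1 hB hB1 hA hAB' hns, hemp]
      simp

lemma fixed_one (S : MulChar F ℂ) (hS : S ^ 2 ≠ 1) {t : F} (ht0 : t ≠ 0) (ht1 : t ≠ 1) :
    quadChar F (1 - t) * ∑ u : F, S (u ^ 2) * quadChar F (1 * Pp t 1 u)
      = (∑ z : F, if z = 0 then 0 else S (Aarg t 1 z) * wt t 1 z) + 2 - Fintype.card F := by
  have ht1' := sub_ne_zero.mpr (Ne.symm ht1)
  have e1 : ∀ u : F, S (u ^ 2) * quadChar F (1 * Pp t 1 u)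
      = quadChar F (1 - t) * (if u = 1 then 0 else (S ^ 2) u) := by
    intro u
    have : 1 * Pp t 1 u = (1 - u) ^ 2 * (1 - t) := by unfold Pp; ring
    rw [this]
    split_ifs with h
    · simp [h, chi_zero]
    · rw [phi_mulsq _ (sub_ne_zero.mpr (Ne.symm h)), map_pow, MulChar.pow_apply' _ two_ne_zero]
      ring
  have e2 : ∀ z : F, (if z = 0 then 0 else S (Aarg t 1 z) * wt t 1 z)
      = 1 - (if z = 0 then 1 else 0) - (if z = 1 then 1 else 0) - (if z = t⁻¹ then 1 else 0) := by
    intro z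
    by_cases h0 : z = 0
    · subst h0
      have : (0 : F) ≠ t⁻¹ := (inv_ne_zero ht0).symm
      simp [this]
    by_cases h1 : z = 1
    · subst h1
      have : (1 : F) ≠ t⁻¹ := fun h => ht1 (by rw [← inv_inv t, ← h, inv_one])
      simp [this, Aarg, chi_zero]
    by_cases h2 : z = t⁻¹
    · subst h2
      simp [ht0, ht1, Aarg, chi_zero]
    · have h1' := sub_ne_zero.mpr (Ne.symm h1)
      have h2' : 1 - t * z ≠ 0 := fun h => h2 (eq_inv_of_mul_eq_one_right (by linear_combination -h))
      have hA : Aarg t 1 z = 1 := by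
        unfold Aarg
        rw [one_mul, one_mul, mul_one, div_self (mul_ne_zero h1' h2')]
      have hw : wt t 1 z = 1 := by
        unfold wt
        rw [mul_one, map_mul, phi_sq h2']
      simp [h0, h1, h2, hA, hw]
  rw [Finset.sum_congr rfl (fun u _ => e1 u), Finset.sum_congr rfl (fun u _ => e2 u),
    ← Finset.mul_sum, sum_ne_one hS, ← mul_assoc, phi_sq ht1']
  simp only [Finset.sum_sub_distrib]
  simp
  ring

lemma prod_eq (S K : MulChar F ℂ) (t : F) :
    (∑ w : F, S (1 - w) * (S⁻¹ * K) w * (quadChar F * S⁻¹) (1 - t * w)) *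
    (∑ w : F, S⁻¹ (1 - w) * (S⁻¹⁻¹ * K⁻¹) w * (quadChar F * S⁻¹⁻¹) (1 - t * w))
    = ∑ B : F, K B * ∑ z : F, if z = 0 then 0 else S (Aarg t B z) * wt t B z := by
  rw [mul_comm, Finset.sum_mul]
  simp only [Finset.mul_sum]
  rw [Finset.sum_comm (s := Finset.univ) (t := Finset.univ) (f := fun B z => K B * _)]
  refine Finset.sum_congr rfl fun z _ => ?_
  by_cases hz : z = 0
  · simp [hz, chi_zero]
  refine Finset.sum_bij' (fun w _ => w / z) (fun B _ => B * z) ?_ ?_ ?_ ?_ ?_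
  · intros; simp
  · intros; simp
  · intros; field_simp
  · intros; field_simp
  · intro w _
    rw [if_neg hz]
    have e1 : w / z * z = w := by field_simp
    unfold Aarg wt
    rw [mul_assoc t (w / z) z, e1]
    simp only [MulChar.mul_apply, MulChar.inv_apply_eq_inv', chi_div, map_mul, inv_inv]
    by_cases hw : w = 0
    · simp [hw, chi_zero]
    have a1 := chi_ne S hz
    have a2 := chi_ne K hz
    have a3 := chi_ne S hw
    field_simp

lemma sum_B (S K : MulChar F ℂ) (hSK : K * S⁻¹ ≠ 1) (hSK' : K * S⁻¹ * quadChar F ≠ 1) :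
    ∑ B : F, (if B = 1 then 0 else K B * (S B⁻¹ * (1 + quadChar F B))) = -2 := by
  have h1 := sum_ne_one hSK
  have h2 := sum_ne_one hSK'
  have : ∀ B : F, (if B = 1 then 0 else K B * (S B⁻¹ * (1 + quadChar F B)))
      = (if B = 1 then 0 else (K * S⁻¹) B) + (if B = 1 then 0 else (K * S⁻¹ * quadChar F) B) := by
    intro B
    split_ifs
    · simp
    · simp only [MulChar.mul_apply, MulChar.inv_apply']; ring
  rw [Finset.sum_congr rfl (fun B _ => this B), Finset.sum_add_distrib, h1, h2]
  norm_num

lemma full_eq (hodd : ringChar F ≠ 2) (S K : MulChar F ℂ) (hS : S ^ 2 ≠ 1)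
    (hSK : K * S⁻¹ ≠ 1) (hSK' : K * S⁻¹ * quadChar F ≠ 1) {t : F} (ht0 : t ≠ 0) (ht1 : t ≠ 1) :
    quadChar F (1 - t) * ∑ B : F, K B * ∑ u : F, S (u ^ 2) * quadChar F (B * Pp t B u)
      = (∑ B : F, K B * ∑ z : F, if z = 0 then 0 else S (Aarg t B z) * wt t B z)
        - Fintype.card F := by
  have h : ∀ B : F, quadChar F (1 - t) * (K B * ∑ u : F, S (u ^ 2) * quadChar F (B * Pp t B u))
      = (K B * ∑ z : F, if z = 0 then 0 else S (Aarg t B z) * wt t B z)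
       + (if B = 1 then 0 else K B * (S B⁻¹ * (1 + quadChar F B)))
       + (if B = 1 then 2 - (Fintype.card F : ℂ) else 0) := by
    intro B
    by_cases hB : B = 0
    · simp [hB, chi_zero]
    by_cases hB1 : B = 1
    · subst hB1
      rw [mul_left_comm, fixed_one S hS ht0 ht1]
      simp
      ring
    · rw [mul_left_comm, fixed_B hodd S ht0 ht1 hB hB1]
      simp [hB1]
      ring
  rw [Finset.mul_sum, Finset.sum_congr rfl (fun B _ => h B), Finset.sum_add_distrib,
    Finset.sum_add_distrib, sum_B S K hSK hSK']
  simp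
  ring

lemma uv_to_B (η S K : MulChar F ℂ) (hS : η * K = S ^ 2) (t : F) :
    ∑ u : F, ∑ v : F, η u * K v * quadChar F (v * (v * (1 - u) ^ 2 - t * u * (v - 1) ^ 2))
      = ∑ B : F, K B * ∑ u : F, S (u ^ 2) * quadChar F (B * Pp t B u) := by
  simp only [Finset.mul_sum]
  rw [Finset.sum_comm (s := Finset.univ) (t := Finset.univ) (f := fun B u => K B * _)]
  refine Finset.sum_congr rfl fun u _ => ?_
  by_cases hu : u = 0
  · simp [hu, chi_zero]
  refine Finset.sum_bij' (fun v _ => v / u) (fun B _ => B * u) ?_ ?_ ?_ ?_ ?_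
  · intros; simp
  · intros; simp
  · intros; field_simp
  · intros; field_simp
  · intro v _
    have e : v * (v * (1 - u) ^ 2 - t * u * (v - 1) ^ 2) = u ^ 2 * (v / u * Pp t (v / u) u) := by
      unfold Pp; field_simp
    have e2 : S (u ^ 2) = η u * K u := by
      rw [map_pow, ← MulChar.pow_apply' _ two_ne_zero, ← hS, MulChar.mul_apply]
    rw [e, phi_mulsq _ hu, e2, chi_div]
    have a1 := chi_ne K hu
    field_simp

end Helpers

/-- The Evans–Greene finite-field Clausen formula for `₃ℙ₂(φ,η,η̄;K,K̄;t)` at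
`t ≠ 0, 1`, when `ηK = S²` is a square. -/
theorem statement2 {F : Type*} [Field F] [Fintype F] [DecidableEq F]
    (hodd : ringChar F ≠ 2) (η K S : MulChar F ℂ)
    (hη : η ≠ 1) (hKφ : K * quadChar F ≠ 1) (hηK : η * K ≠ 1) (hηK' : η * K⁻¹ ≠ 1)
    (hS : η * K = S ^ 2) (t : F) (ht0 : t ≠ 0) (ht1 : t ≠ 1) :
    periodP (quadChar F) [(η, K), (η⁻¹, K⁻¹)] t
      = quadChar F (1 - t)
          * (periodP (quadChar F * K * S⁻¹) [(S, K)] t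
              * periodP (quadChar F * K⁻¹ * S) [(S⁻¹, K⁻¹)] t
            - (Fintype.card F : ℂ)) := by
  have hφ2 : quadChar F * quadChar F = 1 := by
    nth_rewrite 1 [← phi_inv]
    exact inv_mul_cancel _
  have hKK : K ^ 2 ≠ S ^ 2 := by
    intro h
    apply hηK'
    rw [← hS, pow_two] at h
    rw [← mul_right_cancel h, mul_inv_cancel]
  have hSK : K * S⁻¹ ≠ 1 := fun h => hKK (by rw [mul_inv_eq_one.mp h])
  have hSK' : K * S⁻¹ * quadChar F ≠ 1 := by
    intro h
    apply hKK
    have h1 : K * S⁻¹ = quadChar F := by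
      rw [← phi_inv]; exact eq_inv_of_mul_eq_one_left h
    rw [mul_inv_eq_iff_eq_mul.mp h1, mul_pow, pow_two (quadChar F), hφ2, one_mul]
  have hS2 : S ^ 2 ≠ 1 := hS ▸ hηK
  have ht1' := sub_ne_zero.mpr (Ne.symm ht1)
  have L : periodP (quadChar F) [(η, K), (η⁻¹, K⁻¹)] t
      = ∑ x : F, ∑ y : F, (η⁻¹ x * (η * K⁻¹) (1 - x)) * (η y * (η⁻¹ * K) (1 - y) *
        quadChar F (1 - t * x * y)) := by
    simp only [periodP, List.reverse_cons, List.reverse_nil, List.nil_append, List.cons_append,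
      periodPAux, Finset.mul_sum, phi_inv, inv_inv]
  have R1 : periodP (quadChar F * K * S⁻¹) [(S, K)] t
      = quadChar F (1 - t) * ∑ w : F, S (1 - w) * (S⁻¹ * K) w * (quadChar F * S⁻¹) (1 - t * w) := by
    rw [← prod_lemma S K ht1]
    simp only [periodP, List.reverse_cons, List.reverse_nil, List.nil_append, periodPAux]
  have R2 : periodP (quadChar F * K⁻¹ * S) [(S⁻¹, K⁻¹)] t
      = quadChar F (1 - t) * ∑ w : F, S⁻¹ (1 - w) * (S⁻¹⁻¹ * K⁻¹) w *
          (quadChar F * S⁻¹⁻¹) (1 - t * w) := by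
    rw [← prod_lemma S⁻¹ K⁻¹ ht1]
    simp only [periodP, List.reverse_cons, List.reverse_nil, List.nil_append, periodPAux, inv_inv]
  have hp := phi_sq ht1'
  have hfull := full_eq hodd S K hS2 hSK hSK' ht0 ht1
  rw [L, full_uv hodd η K hη hKφ hηK' ht0, uv_to_B η S K hS t, R1, R2, mul_mul_mul_comm, hp, one_mul,
    prod_eq, ← hfull, ← mul_assoc, hp, one_mul]
end

section
/- Let 𝔽_q be a finite field of odd characteristic and let η, S be multiplicative characters of 𝔽_q^× with η nontrivial and η = S². Then ₃ℙ₂(φ, η, η̄; ε, ε; 1; q) = J(S, φS̄)² + J(S̄, φS)². -/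
namespace St4

variable {F : Type*} [Field F] [Fintype F] [DecidableEq F]

theorem chi0 (χ : MulChar F ℂ) : χ 0 = 0 := χ.map_nonunit (by simp)

def mulE (u : F) (hu : u ≠ 0) : F ≃ F := Equiv.mulLeft₀ u hu

theorem mulE_apply (u : F) (hu : u ≠ 0) (x : F) : mulE u hu x = u * x := rfl

theorem inv_eq : (quadChar F)⁻¹ = quadChar F := by
  have : (quadChar F) * quadChar F = 1 := by
    ext a
    simp only [quadChar, MulChar.mul_apply, MulChar.ringHomComp_apply]
    have := quadraticChar_sq_one (F := F) a.ne_zero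
    rw [MulChar.one_apply_coe, ← map_mul, ← sq, this]
    simp
  exact inv_eq_of_mul_eq_one_left this

theorem mul_self {a : F} (ha : a ≠ 0) : quadChar F a * quadChar F a = 1 := by
  simp only [quadChar, MulChar.ringHomComp_apply]
  have := quadraticChar_sq_one (F := F) ha
  rw [← map_mul, ← sq, this]
  simp

theorem phi_inv (a : F) : quadChar F a⁻¹ = quadChar F a := by
  rw [← MulChar.inv_apply', inv_eq]

theorem phi_sq {a : F} (ha : a ≠ 0) : quadChar F (a ^ 2) = 1 := by
  rw [map_pow, sq, mul_self ha]

theorem sum_phi (hodd : ringChar F ≠ 2) : ∑ a : F, quadChar F a = 0 := by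
  have := quadraticChar_sum_zero (F := F) hodd
  simp only [quadChar, MulChar.ringHomComp_apply]
  rw [← map_sum, this, map_zero]

theorem card_sqrt (hodd : ringChar F ≠ 2) (a : F) :
    ∑ t : F, (if t ^ 2 = a then (1 : ℂ) else 0) = 1 + quadChar F a := by
  have := quadraticChar_card_sqrts (F := F) hodd a
  simp only [quadChar, MulChar.ringHomComp_apply]
  rw [Finset.sum_boole]
  have h2 : ({x : F | x ^ 2 = a} : Set F).toFinset = Finset.univ.filter (fun x => x ^ 2 = a) := by
    ext; simp
  rw [h2] at this
  have h3 := congrArg (fun z : ℤ => (z : ℂ)) this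
  push_cast at h3
  rw [h3]
  simp [add_comm]

theorem sum_sq (hodd : ringChar F ≠ 2) (g : F → ℂ) :
    ∑ t : F, g (t ^ 2) = ∑ z : F, (1 + quadChar F z) * g z := by
  simp_rw [← card_sqrt hodd, Finset.sum_mul]
  rw [Finset.sum_comm]
  refine Finset.sum_congr rfl fun t _ => ?_
  simp

theorem card_quad (hodd : ringChar F ≠ 2) (b c : F) :
    ∑ s : F, (if s ^ 2 + b * s + c = 0 then (1 : ℂ) else 0) = 1 + quadChar F (b ^ 2 - 4 * c) := by
  have h2 : (2 : F) ≠ 0 := Ring.two_ne_zero hodd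
  have h4 : (4 : F) ≠ 0 := by
    have := mul_ne_zero h2 h2; norm_num at this; exact this
  rw [← card_sqrt hodd]
  refine Fintype.sum_equiv ((mulE 2 h2).trans (Equiv.addRight b)) _ _ fun s => ?_
  simp only [Equiv.trans_apply, mulE_apply, Equiv.coe_addRight]
  congr 1
  apply propext
  constructor
  · intro h; linear_combination 4 * h
  · intro h
    have : (4 : F) * (s ^ 2 + b * s + c) = 0 := by linear_combination h
    exact (mul_eq_zero.mp this).resolve_left h4

/-- The Legendre sum. -/
noncomputable def M (c : F) : ℂ :=
  ∑ s : F, quadChar F s * quadChar F (s + 1) * quadChar F (s + c)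

noncomputable def L (h k : F) : ℂ :=
  ∑ z : F, quadChar F z * quadChar F (z - h ^ 2) * quadChar F (z - k ^ 2)

noncomputable def N (w : F) : ℂ :=
  ∑ u : F, quadChar F u * quadChar F (u + 1) * quadChar F (u + w) * quadChar F (1 + u + w)

theorem M_eq (hodd : ringChar F ≠ 2) (w : F) (hw : w ≠ 0) :
    M (w ^ 2) = L ((1 + w) / 2) ((1 - w) / 2) := by
  have h2 : (2 : F) ≠ 0 := Ring.two_ne_zero hodd
  have h4 : (4 : F) ≠ 0 := by
    have := mul_ne_zero h2 h2; norm_num at this; exact this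
  have e1 : M (w ^ 2) = ∑ s : F, ∑ x : F,
      quadChar F x * (if s ^ 2 + (1 + w ^ 2 - x) * s + w ^ 2 = 0 then (1 : ℂ) else 0) := by
    refine Finset.sum_congr rfl fun s _ => ?_
    by_cases hs : s = 0
    · subst hs; simp [hw, chi0]
    · rw [Finset.sum_eq_single ((s + 1) * (s + w ^ 2) * s⁻¹)]
      · rw [if_pos (by field_simp; ring)]
        simp only [map_mul, phi_inv]; ring
      · intro x _ hx
        rw [if_neg, mul_zero]
        intro h
        apply hx
        field_simp
        linear_combination -h
      · simp
  rw [e1, Finset.sum_comm]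
  simp_rw [← Finset.mul_sum, card_quad hodd, mul_add, Finset.sum_add_distrib, mul_one]
  rw [sum_phi hodd, zero_add, L]
  symm
  refine Fintype.sum_equiv (mulE 4 h4) _ _ fun z => ?_
  simp only [mulE_apply]
  have : (1 + w ^ 2 - 4 * z) ^ 2 - 4 * w ^ 2
      = 4 ^ 2 * ((z - ((1 + w) / 2) ^ 2) * (z - ((1 - w) / 2) ^ 2)) := by
    field_simp; ring
  have h44 : quadChar F (4 : F) = 1 := by
    rw [← phi_sq h2]; norm_num
  rw [this]
  simp only [map_mul, map_pow, h44]
  ring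

theorem N_eq (hodd : ringChar F ≠ 2) (w : F) (hw : w ≠ 0) :
    N w = L ((1 + w) / 2) ((1 - w) / 2) + ∑ z : F, quadChar F z * quadChar F (z + 1) := by
  have h2 : (2 : F) ≠ 0 := Ring.two_ne_zero hodd
  have h4 : (4 : F) ≠ 0 := by
    have := mul_ne_zero h2 h2; norm_num at this; exact this
  have e1 : N w = ∑ t : F, (fun z => quadChar F (z - ((1 + w) / 2) ^ 2) *
      quadChar F (z - ((1 - w) / 2) ^ 2)) (t ^ 2) := by
    refine Fintype.sum_equiv (Equiv.addRight ((1 + w) / 2)) _ _ fun u => ?_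
    simp only [Equiv.coe_addRight]
    simp only [← map_mul]
    congr 1
    field_simp
    ring
  rw [e1, sum_sq hodd (fun z => quadChar F (z - ((1 + w) / 2) ^ 2) *
      quadChar F (z - ((1 - w) / 2) ^ 2))]
  simp_rw [add_mul, Finset.sum_add_distrib, one_mul]
  rw [add_comm]
  congr 1
  · refine Finset.sum_congr rfl fun z _ => ?_
    ring
  · symm
    refine Fintype.sum_equiv ((mulE w hw).trans (Equiv.addRight (((1 + w) / 2) ^ 2)))
      _ _ fun z => ?_
    simp only [Equiv.trans_apply, mulE_apply, Equiv.coe_addRight]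
    rw [show w * z + ((1 + w) / 2) ^ 2 - ((1 + w) / 2) ^ 2 = w * z by ring,
      show w * z + ((1 + w) / 2) ^ 2 - ((1 - w) / 2) ^ 2 = w * (z + 1) by field_simp; ring]
    simp only [map_mul]
    linear_combination (-quadChar F z * quadChar F (z + 1)) * mul_self hw

def eInv (F : Type*) [Field F] : F ≃ F := (Equiv.addLeft 1).trans (Equiv.inv F)

theorem eInv_apply (u : F) : eInv F u = (1 + u)⁻¹ := rfl

theorem sum_x (f : F → ℂ) : ∑ x, f x = ∑ u, f ((1 + u)⁻¹) :=
  (Fintype.sum_equiv (eInv F) _ _ fun _ => rfl).symm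

theorem sum_y (f : F → ℂ) : ∑ x, f x = ∑ u, f (1 - (1 + u)⁻¹) :=
  (Fintype.sum_equiv ((eInv F).trans (Equiv.subLeft 1)) _ _ fun _ => rfl).symm

theorem P_eq (η : MulChar F ℂ) :
    periodP (quadChar F) [(η, 1), (η⁻¹, 1)] 1 = ∑ w : F, η w * N w := by
  have e : periodP (quadChar F) [(η, 1), (η⁻¹, 1)] 1
      = ∑ x : F, ∑ y : F, η⁻¹ x * η (1 - x) * (η y * η⁻¹ (1 - y) * quadChar F (1 - x * y)) := by
    simp [periodP, periodPAux, inv_eq, Finset.mul_sum]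
  have e2 : ∑ w : F, η w * N w = ∑ u : F, ∑ w : F, η w * (quadChar F u * quadChar F (u + 1) *
      quadChar F (u + w) * quadChar F (1 + u + w)) := by
    simp only [N, Finset.mul_sum]
    rw [Finset.sum_comm]
  rw [e, e2, sum_x]
  refine Finset.sum_congr rfl fun u _ => ?_
  rw [sum_y]
  by_cases hu : u = 0
  · subst hu; simp [chi0]
  refine Fintype.sum_equiv (mulE u hu) _ _ fun v => ?_
  simp only [mulE_apply]
  by_cases hu1 : 1 + u = 0
  · have : u + 1 = 0 := by rw [add_comm]; exact hu1
    simp [hu1, this, chi0]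
  by_cases hv1 : 1 + v = 0
  · have : u + u * v = 0 := by linear_combination u * hv1
    simp [hv1, this, chi0]
  have a1 : 1 - (1 + u)⁻¹ = u * (1 + u)⁻¹ := by field_simp; ring
  have a2 : 1 - (1 + v)⁻¹ = v * (1 + v)⁻¹ := by field_simp; ring
  have a3 : 1 - (1 + u)⁻¹ * (v * (1 + v)⁻¹) = (1 + u + u * v) * (1 + u)⁻¹ * (1 + v)⁻¹ := by
    field_simp; ring
  have a4 : 1 - v * (1 + v)⁻¹ = (1 + v)⁻¹ := by field_simp; ring
  have b1 : η (1 + u) * η (1 + u)⁻¹ = 1 := by rw [← map_mul, mul_inv_cancel₀ hu1, map_one]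
  have b2 : η (1 + v) * η (1 + v)⁻¹ = 1 := by rw [← map_mul, mul_inv_cancel₀ hv1, map_one]
  rw [a1, a2, a3, a4, show u + u * v = u * (1 + v) by ring, add_comm u 1]
  simp only [MulChar.inv_apply', inv_inv, map_mul, phi_inv]
  have b3 := mul_self hu
  generalize quadChar F u = p at *
  generalize quadChar F (1 + u) = p1 at *
  generalize quadChar F (1 + v) = p2 at *
  generalize quadChar F (1 + u + u * v) = p3 at *
  calc _ = (η (1 + u) * η (1 + u)⁻¹) * (η (1 + v) * η (1 + v)⁻¹) * (η u * η v * p1 * p2 * p3) := by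
        ring
    _ = η u * η v * p1 * p2 * p3 := by rw [b1, b2]; ring
    _ = (p * p) * (η u * η v * p1 * p2 * p3) := by rw [b3]; ring
    _ = _ := by ring

theorem J_eq (S : MulChar F ℂ) :
    jacobiSum S (quadChar F * S⁻¹) = ∑ s : F, S s * quadChar F (1 + s) := by
  rw [jacobiSum, sum_y]
  refine Finset.sum_congr rfl fun s _ => ?_
  by_cases hs : 1 + s = 0
  · simp [hs, chi0]
  have a2 : 1 - (1 + s)⁻¹ = s * (1 + s)⁻¹ := by field_simp; ring
  have b2 : S (1 + s) * S (1 + s)⁻¹ = 1 := by rw [← map_mul, mul_inv_cancel₀ hs, map_one]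
  rw [sub_sub_cancel, a2]
  simp only [MulChar.mul_apply, MulChar.inv_apply', inv_inv, map_mul, phi_inv]
  linear_combination (S s * quadChar F (1 + s)) * b2

theorem J_sq (S : MulChar F ℂ) :
    jacobiSum S (quadChar F * S⁻¹) ^ 2 = ∑ c : F, S c * M c := by
  have e2 : ∑ c : F, S c * M c = ∑ s : F, ∑ c : F, S c * (quadChar F s * quadChar F (s + 1) *
      quadChar F (s + c)) := by
    simp only [M, Finset.mul_sum]
    rw [Finset.sum_comm]
  rw [J_eq, sq, Finset.sum_mul_sum, e2]
  refine Finset.sum_congr rfl fun u _ => ?_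
  by_cases hu : u = 0
  · subst hu; simp [chi0]
  refine Fintype.sum_equiv (mulE u hu) _ _ fun v => ?_
  simp only [mulE_apply]
  rw [show u + u * v = u * (1 + v) by ring, add_comm u 1]
  simp only [map_mul]
  linear_combination (-S u * S v * quadChar F (1 + u) * quadChar F (1 + v)) * mul_self hu

theorem M_inv (c : F) (hc : c ≠ 0) : M c⁻¹ = quadChar F c * M c := by
  rw [M, M, Finset.mul_sum]
  refine Fintype.sum_equiv (mulE c hc) _ _ fun s => ?_
  simp only [mulE_apply]
  rw [show c * s + c = c * (s + 1) by ring, show c * s + 1 = c * (s + c⁻¹) by field_simp]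
  simp only [map_mul]
  have := mul_self hc
  generalize quadChar F c = p at *
  linear_combination (-quadChar F s * quadChar F (s + 1) * quadChar F (s + c⁻¹)) * (p * p + 1) * this

theorem RHS_eq (hodd : ringChar F ≠ 2) (S : MulChar F ℂ) :
    jacobiSum S (quadChar F * S⁻¹) ^ 2 + jacobiSum S⁻¹ (quadChar F * S) ^ 2
      = ∑ w : F, (S ^ 2) w * M (w ^ 2) := by
  have h1 := J_sq S⁻¹
  rw [inv_inv] at h1
  have h2 : ∑ c : F, S⁻¹ c * M c = ∑ c : F, quadChar F c * (S c * M c) := by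
    refine Fintype.sum_equiv (Equiv.inv F) _ _ fun c => ?_
    by_cases hc : c = 0
    · subst hc; simp [chi0]
    simp only [Equiv.inv_apply, MulChar.inv_apply']
    rw [M_inv c hc, phi_inv]
    linear_combination (-S c⁻¹ * M c) * mul_self hc
  rw [h1, h2, J_sq, ← Finset.sum_add_distrib]
  have h3 := sum_sq hodd (fun c : F => S c * M c)
  simp only [add_mul, one_mul] at h3
  rw [← h3]
  refine Finset.sum_congr rfl fun w _ => ?_
  rw [map_pow, sq (S), MulChar.mul_apply, sq (S w)]

end St4

/-- The special case `K = ε` of the finite-field Clausen evaluation: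
`₃ℙ₂(φ,η,η̄;ε,ε;1) = J(S,φS̄)² + J(S̄,φS)²` when `η = S²`. -/
theorem statement4 {F : Type*} [Field F] [Fintype F] [DecidableEq F]
    (hodd : ringChar F ≠ 2) (η S : MulChar F ℂ) (hη : η ≠ 1) (hS : η = S ^ 2) :
    periodP (quadChar F) [(η, 1), (η⁻¹, 1)] 1
      = jacobiSum S (quadChar F * S⁻¹) ^ 2 + jacobiSum S⁻¹ (quadChar F * S) ^ 2 := by
  rw [St4.P_eq, St4.RHS_eq hodd, ← hS]
  have h0 : ∑ w : F, η w = 0 := MulChar.sum_eq_zero_of_ne_one hη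
  have : ∀ w : F, η w * St4.N w = η w * St4.M (w ^ 2)
      + η w * ∑ z : F, quadChar F z * quadChar F (z + 1) := by
    intro w
    by_cases hw : w = 0
    · subst hw; simp [St4.chi0]
    rw [St4.N_eq hodd w hw, St4.M_eq hodd w hw, mul_add]
  simp_rw [this, Finset.sum_add_distrib]
  rw [← Finset.sum_mul, h0, zero_mul, add_zero]
end

section
/- Let 𝔽_q be a finite field of odd characteristic and let η, K be multiplicative characters of 𝔽_q^× such that none of η, Kφ, ηK, ηK̄ is trivial and ηK is not the square of any multiplicative character of 𝔽_q^×. Then ₃ℙ₂(φ, η, η̄; K, K̄; 1; q) = 0. -/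
lemma s5_div {F : Type*} [Field F] (χ : MulChar F ℂ) (a b : F) :
    χ (a / b) = χ a * (χ b)⁻¹ := by
  rw [div_eq_mul_inv, map_mul, ← MulChar.inv_apply', MulChar.inv_apply_eq_inv']

lemma s5_ne {F : Type*} [Field F] (χ : MulChar F ℂ) {a : F} (h : a ≠ 0) : χ a ≠ 0 :=
  (IsUnit.map χ (isUnit_iff_ne_zero.mpr h)).ne_zero

lemma s5_zero {F : Type*} [Field F] (χ : MulChar F ℂ) : χ 0 = 0 :=
  MulChar.map_zero χ

lemma s5_refl {F : Type*} [Field F] [Fintype F] (η K : MulChar F ℂ) (x : F)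
    (hx : x ≠ 0) (hx1 : 1 - x ≠ 0) :
    ∑ y : F, η y * (η⁻¹ * K) (1 - y) * η (1 - (1 - x) * y) =
    (η * K) (-1) * K x * (K (1 - x))⁻¹ * ∑ y : F, η y * (η⁻¹ * K) (1 - y) * η (1 - x * y) := by
  have hb : Function.Bijective (fun w : F => (1 - x * w) / (1 - x)) := by
    rw [← Finite.injective_iff_bijective]
    intro a b h
    simp only at h
    field_simp at h
    have : x * a = x * b := by linear_combination -h
    exact mul_left_cancel₀ hx this
  rw [← Function.Bijective.sum_comp hb, Finset.mul_sum]
  refine Finset.sum_congr rfl fun w _ => ?_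
  have e1 : 1 - (1 - x * w) / (1 - x) = (-1) * x * (1 - w) / (1 - x) := by
    field_simp; ring
  have e2 : 1 - (1 - x) * ((1 - x * w) / (1 - x)) = x * w := by
    field_simp; ring
  simp only [e1, e2, MulChar.mul_apply, MulChar.inv_apply_eq_inv', s5_div, map_mul]
  have h1 := s5_ne η hx
  have h2 := s5_ne η hx1
  have h3 := s5_ne K hx1
  have h4 : η (-1) * η (-1) = 1 := by rw [← map_mul]; simp
  have h5 : (η (-1))⁻¹ = η (-1) := inv_eq_of_mul_eq_one_right h4
  simp only [mul_inv, inv_inv, h5]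
  field_simp

lemma s5_symm {F : Type*} [Field F] [Fintype F] (A B C : MulChar F ℂ) (y : F)
    (hB : B ≠ 1) (hBC : B⁻¹ * C ≠ 1) :
    jacobiSum B (B⁻¹ * C) * ∑ x : F, A x * (A⁻¹ * C) (1 - x) * B⁻¹ (1 - x * y) =
    ∑ a : F, ∑ b : F, (A⁻¹ * C) a * (B⁻¹ * C) b * C⁻¹ ((1 + a) * (1 + b) - y) := by
  have hJ : ∀ x : F, jacobiSum B (B⁻¹ * C) * B⁻¹ (1 - x * y) =
      ∑ v : F, B v * (B⁻¹ * C) (1 - v * (1 - x * y)) := by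
    intro x
    by_cases h : 1 - x * y = 0
    · simp [h, s5_zero, MulChar.sum_eq_zero_of_ne_one hB]
    · have hb : Function.Bijective (fun w : F => w * (1 - x * y)) := mulRight_bijective₀ _ h
      rw [jacobiSum, ← Function.Bijective.sum_comp hb, Finset.sum_mul]
      refine Finset.sum_congr rfl fun v _ => ?_
      have := s5_ne B h
      simp only [map_mul, MulChar.inv_apply_eq_inv']
      field_simp
  have hR : ∑ a : F, ∑ b : F, (A⁻¹ * C) a * (B⁻¹ * C) b * C⁻¹ ((1 + a) * (1 + b) - y) =
      ∑ x : F, ∑ b : F, (A⁻¹ * C) (x⁻¹ - 1) * (B⁻¹ * C) b * C⁻¹ (x⁻¹ * (1 + b) - y) := by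
    have hb : Function.Bijective (fun x : F => x⁻¹ - 1) :=
      (Equiv.subRight (1 : F)).bijective.comp inv_involutive.bijective
    rw [← Function.Bijective.sum_comp hb]
    simp
  rw [hR, Finset.mul_sum]
  refine Finset.sum_congr rfl fun x _ => ?_
  rw [mul_left_comm, hJ, mul_assoc]
  by_cases hx : x = 0
  · subst hx
    have : ∑ b : F, (A⁻¹ * C) (0⁻¹ - 1) * (B⁻¹ * C) b * C⁻¹ (0⁻¹ * (1 + b) - y) =
        (A⁻¹ * C) (0⁻¹ - 1) * C⁻¹ (-y) * ∑ b : F, (B⁻¹ * C) b := by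
      rw [Finset.mul_sum]
      refine Finset.sum_congr rfl fun b _ => ?_
      simp only [inv_zero, zero_mul, zero_sub]
      ring
    rw [this, MulChar.sum_eq_zero_of_ne_one hBC]
    simp [s5_zero]
  · have hb : Function.Bijective (fun v : F => v⁻¹ - (1 - x * y)) :=
      (Equiv.subRight (1 - x * y)).bijective.comp inv_involutive.bijective
    conv_rhs => rw [← Function.Bijective.sum_comp hb]
    rw [Finset.mul_sum, Finset.mul_sum]
    refine Finset.sum_congr rfl fun v _ => ?_
    have e1 : x⁻¹ * (1 + (v⁻¹ - (1 - x * y))) - y = 1 / x * (1 / v) := by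
      field_simp; ring
    have e3 : x⁻¹ - 1 = (1 - x) / x := by field_simp
    by_cases hv : v = 0
    · subst hv
      simp only [e1]
      simp [s5_zero]
    have e2 : v⁻¹ - (1 - x * y) = (1 - v * (1 - x * y)) / v := by field_simp
    simp only [e1]
    rw [e2, e3]
    have h1 := s5_ne A hx
    have h2 := s5_ne C hx
    have h3 := s5_ne B hv
    have h4 := s5_ne C hv
    simp only [MulChar.mul_apply, MulChar.inv_apply_eq_inv', s5_div, map_mul, map_one]
    field_simp

lemma s5_neg {F : Type*} [Field F] [Fintype F] [DecidableEq F]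
    (hodd : ringChar F ≠ 2) (χ : MulChar F ℂ) (hns : ∀ S : MulChar F ℂ, χ ≠ S ^ 2) :
    χ (-1) = -1 := by
  have h4 : χ (-1) * χ (-1) = 1 := by rw [← map_mul]; simp
  rcases mul_self_eq_one_iff.mp h4 with h | h
  swap
  · exact h
  exfalso
  obtain ⟨g, hg⟩ := IsCyclic.exists_generator (α := Fˣ)
  obtain ⟨m, hm⟩ : ∃ m, Fintype.card Fˣ = 2 * m := by
    have := FiniteField.odd_card_of_char_ne_two hodd
    rw [Fintype.card_units]
    exact ⟨Fintype.card F / 2, by omega⟩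
  have hord : orderOf g = Fintype.card Fˣ := orderOf_eq_card_of_forall_mem_zpowers hg |>.trans Nat.card_eq_fintype_card
  have hpos : 0 < Fintype.card Fˣ := Fintype.card_pos
  have hgm : ((g ^ m : Fˣ) : F) = -1 := by
    have h1 : ((g ^ m : Fˣ) : F) * ((g ^ m : Fˣ) : F) = 1 := by
      rw [← Units.val_mul, ← pow_add, ← two_mul, ← hm, ← hord, pow_orderOf_eq_one]; simp
    rcases mul_self_eq_one_iff.mp h1 with h | h
    · have : g ^ m = 1 := Units.ext h
      have := Nat.le_of_dvd (by omega) (orderOf_dvd_of_pow_eq_one this)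
      omega
    · exact h
  obtain ⟨z, hz⟩ := IsAlgClosed.exists_pow_nat_eq (χ g) (n := 2) (by norm_num)
  have hz1 : z ^ Fintype.card Fˣ = 1 := by
    rw [hm, pow_mul, hz, ← map_pow, ← Units.val_pow_eq_pow_val, hgm, h]
  have hmem : (Units.ofPowEqOne z _ hz1 hpos.ne') ∈ rootsOfUnity (Fintype.card Fˣ) ℂ := by
    rw [mem_rootsOfUnity]; ext; simp
  refine hns (MulChar.ofRootOfUnity hmem hg) ?_
  rw [MulChar.eq_iff hg]
  rw [MulChar.pow_apply_coe, MulChar.ofRootOfUnity_spec]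
  simp [hz]

lemma s5_jne {F : Type*} [Field F] [Fintype F] (A B : MulChar F ℂ) (hA : A ≠ 1) (hB : B ≠ 1) :
    jacobiSum A B ≠ 0 := by
  by_cases h : A * B = 1
  · have : B = A⁻¹ := (inv_eq_of_mul_eq_one_right h).symm
    rw [this, jacobiSum_nontrivial_inv hA]
    exact neg_ne_zero.mpr (s5_ne A (by simp))
  · intro h0
    have := jacobiSum_mul_jacobiSum_inv (F := F) (F' := ℂ) (by 
      rw [ringChar.eq_zero]; exact (CharP.ringChar_ne_zero_of_finite F).symm) hA hB h
    rw [h0, zero_mul] at this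
    exact (Nat.cast_ne_zero.mpr Fintype.card_ne_zero) this.symm

/-- Vanishing of `₃ℙ₂(φ,η,η̄;K,K̄;1)` when `ηK` is not a square of any multiplicative
character. -/
theorem statement5 {F : Type*} [Field F] [Fintype F] [DecidableEq F]
    (hodd : ringChar F ≠ 2) (η K : MulChar F ℂ)
    (hη : η ≠ 1) (hKφ : K * quadChar F ≠ 1) (hηK : η * K ≠ 1) (hηK' : η * K⁻¹ ≠ 1)
    (hns : ∀ S : MulChar F ℂ, η * K ≠ S ^ 2) :
    periodP (quadChar F) [(η, K), (η⁻¹, K⁻¹)] 1 = 0 := by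
  have hφ1 : quadChar F ≠ 1 := by
    intro h
    obtain ⟨a, ha⟩ := quadraticChar_exists_neg_one' hodd
    have h1 : quadChar F a = 1 := by rw [h]; simp
    simp [quadChar, ha] at h1
    norm_num at h1
  have hφi : (quadChar F)⁻¹ = quadChar F := by
    have : (quadChar F) * quadChar F = 1 := by
      rw [← sq]
      exact ((quadraticChar_isQuadratic F).comp (Int.castRingHom ℂ)).sq_eq_one
    exact inv_eq_of_mul_eq_one_right this
  have hsgn := s5_neg hodd _ hns
  generalize quadChar F = φ at *
  have hKφ' : φ * K⁻¹ ≠ 1 := by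
    intro h
    apply hKφ
    rw [← inv_eq_one, mul_inv, hφi, mul_comm]; exact h
  have hJ : jacobiSum φ (φ⁻¹ * K⁻¹) ≠ 0 := s5_jne _ _ hφ1 (by rwa [hφi])
  have hsw : ∀ y : F,
      jacobiSum φ (φ⁻¹ * K⁻¹) * ∑ x : F, η⁻¹ x * (η⁻¹⁻¹ * K⁻¹) (1 - x) * φ⁻¹ (1 - x * y) =
      jacobiSum η⁻¹ (η⁻¹⁻¹ * K⁻¹) *
        ∑ x : F, φ x * (φ⁻¹ * K⁻¹) (1 - x) * η⁻¹⁻¹ (1 - x * y) := by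
    intro y
    rw [s5_symm _ _ _ _ hφ1 (by rwa [hφi]),
      s5_symm _ _ _ _ (inv_ne_one.mpr hη) (by rwa [inv_inv]), Finset.sum_comm]
    refine Finset.sum_congr rfl fun a _ => Finset.sum_congr rfl fun b _ => ?_
    rw [mul_comm (1 + b)]; ring
  have hS : periodP φ [(η, K), (η⁻¹, K⁻¹)] 1 =
      ∑ y : F, η y * (η⁻¹ * K) (1 - y) *
        ∑ x : F, η⁻¹ x * (η⁻¹⁻¹ * K⁻¹) (1 - x) * φ⁻¹ (1 - x * y) := by
    simp only [periodP, periodPAux, List.reverse_cons, List.reverse_nil, List.nil_append,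
      List.cons_append, one_mul, Finset.mul_sum]
    rw [Finset.sum_comm]
    refine Finset.sum_congr rfl fun a _ => Finset.sum_congr rfl fun b _ => ?_
    ring
  have hV : ∑ x : F, φ x * (φ⁻¹ * K⁻¹) (1 - x) *
      ∑ y : F, η y * (η⁻¹ * K) (1 - y) * η (1 - x * y) = 0 := by
    set f : F → ℂ := fun x => ∑ y : F, η y * (η⁻¹ * K) (1 - y) * η (1 - x * y) with hf
    have hneg : ∑ x : F, φ x * (φ⁻¹ * K⁻¹) (1 - x) * f x =
        - ∑ x : F, φ x * (φ⁻¹ * K⁻¹) (1 - x) * f x := by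
      conv_lhs => rw [← Equiv.sum_comp (Equiv.subLeft (1 : F))]
      rw [← Finset.sum_neg_distrib]
      refine Finset.sum_congr rfl fun x _ => ?_
      simp only [Equiv.subLeft_apply, sub_sub_cancel, hφi]
      by_cases hx : x = 0
      · subst hx; simp [s5_zero]
      by_cases hx1 : 1 - x = 0
      · rw [hx1]; simp [s5_zero]
      have := s5_refl η K x hx hx1
      have e : f (1 - x) = (η * K) (-1) * K x * (K (1 - x))⁻¹ * f x := this
      rw [e, hsgn]
      have h2 := s5_ne K hx
      have h3 := s5_ne K hx1
      simp only [MulChar.mul_apply, MulChar.inv_apply_eq_inv']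
      field_simp
    exact self_eq_neg.mp hneg
  have : jacobiSum φ (φ⁻¹ * K⁻¹) * periodP φ [(η, K), (η⁻¹, K⁻¹)] 1 = 0 := by
    rw [hS, Finset.mul_sum]
    simp only [mul_left_comm (jacobiSum φ (φ⁻¹ * K⁻¹)), hsw]
    simp only [mul_left_comm _ (jacobiSum η⁻¹ (η⁻¹⁻¹ * K⁻¹)), ← Finset.mul_sum]
    rw [mul_eq_zero]; right
    rw [← hV]
    simp only [Finset.mul_sum]
    rw [Finset.sum_comm]
    refine Finset.sum_congr rfl fun a _ => Finset.sum_congr rfl fun b _ => ?_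
    rw [inv_inv]; ring
  exact (mul_eq_zero.mp this).resolve_left hJ
end

section
/- Let 𝔽_q be a finite field of odd characteristic and let A, B, C, D, E be multiplicative characters of 𝔽_q^×. Then ₆ℙ₅(A, B, C, A, D, E; AD̄, AĒ, ε, AB̄, AC̄; 1; q) = (BCDE)(−1) · ∑_{t ∈ 𝔽_q} A(t) · ( ₃ℙ₂(A, B, C; AD̄, AĒ; t; q) )², and this also equals (BCDE)(−1) · ∑_{t ∈ 𝔽_q} A(t) · ( ₃ℙ₂(A, D, E; AB̄, AC̄; t; q) )². -/
section helpers
variable {F : Type*} [Field F] [Fintype F]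

lemma mc_inv (A : MulChar F ℂ) (x : F) : A⁻¹ x = (A x)⁻¹ := by
  rw [MulChar.inv_apply_eq_inv]; simp

lemma mc_neg_sq (A : MulChar F ℂ) : A (-1) * A (-1) = 1 := by
  rw [← map_mul]; simp

lemma mc_ne (A : MulChar F ℂ) {x : F} (hx : x ≠ 0) : A x ≠ 0 :=
  ((Ne.isUnit hx).map A).ne_zero

lemma mc_inv0 (A : MulChar F ℂ) (x : F) : A x⁻¹ = (A x)⁻¹ := by
  rw [← mc_inv, MulChar.inv_apply']

lemma wt_inv (A B D : MulChar F ℂ) {x : F} (hx : x ≠ 0) :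
    B x⁻¹ * (B⁻¹ * (A * D⁻¹)) (1 - x⁻¹)
      = (A * B * D) (-1) * (A x)⁻¹ * (D x * (D⁻¹ * (A * B⁻¹)) (1 - x)) := by
  have h : 1 - x⁻¹ = (-1) * (1 - x) * x⁻¹ := by field_simp; ring
  rw [h]
  have hA := mc_ne A hx
  have hB := mc_ne B hx
  have hD := mc_ne D hx
  have h1 : (B (-1))⁻¹ = B (-1) := inv_eq_of_mul_eq_one_left (mc_neg_sq B)
  have h2 : (D (-1))⁻¹ = D (-1) := inv_eq_of_mul_eq_one_left (mc_neg_sq D)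
  simp only [MulChar.mul_apply, map_mul, mc_inv, mc_inv0, h1, h2]
  field_simp

lemma ker_inv (A : MulChar F ℂ) {x : F} (hx : x ≠ 0) :
    A⁻¹ (1 - x⁻¹) = A (-1) * A x * A⁻¹ (1 - x) := by
  have h : 1 - x⁻¹ = (-1) * (1 - x) * x⁻¹ := by field_simp; ring
  have h1 : (A (-1))⁻¹ = A (-1) := inv_eq_of_mul_eq_one_left (mc_neg_sq A)
  rw [h]
  simp only [map_mul, mc_inv, mc_inv0, h1, inv_inv]
  ring

lemma period_inv (A B C D E : MulChar F ℂ) {t : F} (ht : t ≠ 0) :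
    periodP A [(B, A * D⁻¹), (C, A * E⁻¹)] t⁻¹
      = (A * B * C * D * E) (-1) * A t * periodP A [(D, A * B⁻¹), (E, A * C⁻¹)] t := by
  simp only [periodP, List.reverse_cons, List.reverse_nil, List.nil_append, List.cons_append,
    periodPAux, Finset.mul_sum]
  rw [← Equiv.sum_comp (Equiv.inv F)]
  refine Finset.sum_congr rfl fun y _ => ?_
  rw [← Equiv.sum_comp (Equiv.inv F)]
  refine Finset.sum_congr rfl fun x _ => ?_
  simp only [Equiv.inv_apply]
  by_cases hy : y = 0
  · simp [hy, MulChar.map_zero]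
  by_cases hx : x = 0
  · simp [hx, MulChar.map_zero]
  have e : t⁻¹ * y⁻¹ * x⁻¹ = (t * y * x)⁻¹ := by rw [mul_inv, mul_inv]
  rw [wt_inv A B D hx, wt_inv A C E hy, e, ker_inv A (by simp [ht, hx, hy])]
  have hA := mc_ne A hx
  have hB := mc_ne A hy
  have hs := mc_neg_sq A
  simp only [map_mul A, MulChar.mul_apply A, MulChar.mul_apply (A * B), MulChar.mul_apply (A * C),
    MulChar.mul_apply (A * B * C), MulChar.mul_apply (A * B * C * D)]
  generalize (D⁻¹ * (A * B⁻¹)) (1 - x) = w1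
  generalize (E⁻¹ * (A * C⁻¹)) (1 - y) = w2
  generalize A⁻¹ (1 - t * y * x) = k
  generalize A x = ax at *
  generalize A y = ay at *
  generalize A t = u
  generalize A (-1) = a at *
  generalize B (-1) = b
  generalize C (-1) = c
  generalize D (-1) = d
  generalize E (-1) = e
  generalize D x = dx
  generalize E y = ey
  have ix : ax⁻¹ * ax = 1 := inv_mul_cancel₀ hA
  have iy : ay⁻¹ * ay = 1 := inv_mul_cancel₀ hB
  calc _ = (a * a) * (ax⁻¹ * ax) * (ay⁻¹ * ay) * (a * b * c * d * e * u * w1 * w2 * k * dx * ey) := by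
        ring
    _ = _ := by rw [hs, ix, iy]; ring

lemma period_six (A : MulChar F ℂ) (p q r s : MulChar F ℂ × MulChar F ℂ) :
    periodP A [p, q, (A, 1), r, s] 1
      = ∑ t : F, A (-1) * (1 : MulChar F ℂ) t * (periodP A [p, q] t * periodP A [r, s] t⁻¹) := by
  have key : ∀ y x : F, y ≠ 0 → x ≠ 0 → ∀ f : F → ℂ,
      ∑ z : F, A z * (A⁻¹ * 1) (1 - z) * f (1 * y * x * z)
        = ∑ t : F, A (-1) * (1 : MulChar F ℂ) t * f t * A⁻¹ (1 - t⁻¹ * y * x) := by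
    intro y x hy hx f
    rw [← Equiv.sum_comp (Equiv.mulLeft₀ (y * x) (mul_ne_zero hy hx))
      (fun t => A (-1) * (1 : MulChar F ℂ) t * f t * A⁻¹ (1 - t⁻¹ * y * x))]
    refine Finset.sum_congr rfl fun z _ => ?_
    simp only [Equiv.mulLeft₀_apply, one_mul, mul_one]
    by_cases hz : z = 0
    · simp [hz, MulChar.map_zero]
    have e : (y * x * z)⁻¹ * y * x = z⁻¹ := by field_simp
    rw [e, ker_inv A hz, MulChar.one_apply (by simp [hx, hy, hz])]
    linear_combination (-A z * A⁻¹ (1 - z) * f (y * x * z)) * mc_neg_sq A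
  have key2 : ∀ y x : F, y ≠ 0 → x ≠ 0 →
      periodPAux A [(A, 1), q, p] (1 * y * x)
        = ∑ t : F, A (-1) * (1 : MulChar F ℂ) t * periodPAux A [q, p] t * A⁻¹ (1 - t⁻¹ * y * x) :=
    fun y x hy hx => key y x hy hx _
  have h3 : ∀ t, periodPAux A [s, r] t = ∑ y : F, s.1 y * (s.1⁻¹ * s.2) (1 - y) *
      ∑ x : F, r.1 x * (r.1⁻¹ * r.2) (1 - x) * A⁻¹ (1 - t * y * x) := fun t => rfl
  have h5 : periodPAux A [s, r, (A, 1), q, p] 1 = ∑ y : F, s.1 y * (s.1⁻¹ * s.2) (1 - y) *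
      ∑ x : F, r.1 x * (r.1⁻¹ * r.2) (1 - x) * periodPAux A [(A, 1), q, p] (1 * y * x) := rfl
  change periodPAux A [s, r, (A, 1), q, p] 1 = ∑ t : F, A (-1) * (1 : MulChar F ℂ) t *
    (periodPAux A [q, p] t * periodPAux A [s, r] t⁻¹)
  rw [h5]
  simp only [h3, Finset.mul_sum]
  rw [Finset.sum_comm (s := (Finset.univ : Finset F)) (t := (Finset.univ : Finset F))
    (f := fun t y => ∑ x : F, A (-1) * (1 : MulChar F ℂ) t * (periodPAux A [q, p] t *
      (s.1 y * (s.1⁻¹ * s.2) (1 - y) * (r.1 x * (r.1⁻¹ * r.2) (1 - x) * A⁻¹ (1 - t⁻¹ * y * x)))))]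
  refine Finset.sum_congr rfl fun y _ => ?_
  rw [Finset.sum_comm]
  refine Finset.sum_congr rfl fun x _ => ?_
  by_cases hy : y = 0
  · simp [hy, MulChar.map_zero]
  by_cases hx : x = 0
  · simp [hx, MulChar.map_zero]
  rw [key2 y x hy hx, Finset.mul_sum, Finset.mul_sum]
  refine Finset.sum_congr rfl fun t _ => ?_
  ring

end helpers

/-- The well-poised `₆ℙ₅(A,B,C,A,D,E; AD̄,AĒ,ε,AB̄,AC̄; 1)` expressed as a weighted
sum of squares of `₃ℙ₂` values, in two ways. -/
theorem statement6 {F : Type*} [Field F] [Fintype F] (hodd : ringChar F ≠ 2)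
    (A B C D E : MulChar F ℂ) :
    (periodP A [(B, A * D⁻¹), (C, A * E⁻¹), (A, 1), (D, A * B⁻¹), (E, A * C⁻¹)] 1
        = (B * C * D * E) (-1)
            * ∑ t : F, A t * periodP A [(B, A * D⁻¹), (C, A * E⁻¹)] t ^ 2)
    ∧ (periodP A [(B, A * D⁻¹), (C, A * E⁻¹), (A, 1), (D, A * B⁻¹), (E, A * C⁻¹)] 1
        = (B * C * D * E) (-1)
            * ∑ t : F, A t * periodP A [(D, A * B⁻¹), (E, A * C⁻¹)] t ^ 2) := by
  rw [period_six]
  constructor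
  · rw [Finset.mul_sum]
    refine Finset.sum_congr rfl fun t _ => ?_
    by_cases ht : t = 0
    · simp [ht, MulChar.map_zero]
    rw [period_inv A D E B C ht, MulChar.one_apply (Ne.isUnit ht)]
    simp only [MulChar.mul_apply]
    linear_combination (B (-1) * C (-1) * D (-1) * E (-1) * A t *
      periodP A [(B, A * D⁻¹), (C, A * E⁻¹)] t ^ 2) * mc_neg_sq A
  · rw [Finset.mul_sum, ← Equiv.sum_comp (Equiv.inv F)]
    refine Finset.sum_congr rfl fun t _ => ?_
    simp only [Equiv.inv_apply, inv_inv]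
    by_cases ht : t = 0
    · simp [ht, MulChar.map_zero]
    rw [period_inv A B C D E ht, MulChar.one_apply (Ne.isUnit (inv_ne_zero ht))]
    simp only [MulChar.mul_apply]
    linear_combination (B (-1) * C (-1) * D (-1) * E (-1) * A t *
      periodP A [(D, A * B⁻¹), (E, A * C⁻¹)] t ^ 2) * mc_neg_sq A
end

section
/- Let (c,f) be one of the seven pairs (1/2,1/2), (1/2,1/3), (1/2,1/6), (1/3,1/3), (1/6,1/6), (1/5,2/5), (1/10,3/10), and let M(c,f) be the least common denominator of the rationals 1/2, c, 1−c, f, 1−f, 3/2−c, 1/2+c, 3/2−f, 1/2+f. Then for every odd prime power q with q ≡ 1 (mod M(c,f)) and every generator ω of the group of multiplicative characters of 𝔽_q^×, one has ₄ℙ₃(φ, φ, ω^{(q−1)f}, ω^{(q−1)(1−f)}; ε, ω^{(q−1)(1/2−c)}, ω^{(q−1)(1/2+c)}; 1; q) = ₄ℙ₃(φ, φ, ω^{(q−1)c}, ω^{(q−1)(1−c)}; ε, ω^{(q−1)(1/2−f)}, ω^{(q−1)(1/2+f)}; 1; q), where all exponents (q−1)f, (q−1)(1/2−c), etc. are integers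 since q ≡ 1 (mod M(c,f)). -/
/-- The least common denominator of a list of rational numbers. -/
def lcd (l : List ℚ) : ℕ := (l.map Rat.den).foldr Nat.lcm 1

lemma s7_G {F : Type*} [Field F] [Fintype F] (φ : MulChar F ℂ) (hφ : φ⁻¹ = φ) (l : F)
    (hl : l ≠ 0) :
    ∑ z : F, φ z * φ (1 - z) * φ (1 - l⁻¹ * z) = φ l * ∑ z : F, φ z * φ (1 - z) * φ (1 - l * z) := by
  rw [Finset.mul_sum]
  refine (Fintype.sum_equiv (Equiv.mulLeft₀ l hl) _ _ fun z => ?_).symm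
  simp only [Equiv.mulLeft₀_apply, map_mul, inv_mul_cancel_left₀ hl]
  ring

lemma s7_term {F : Type*} [Field F] [Fintype F] (φ X Y : MulChar F ℂ) (hφ : φ⁻¹ = φ) (x : F)
    (hx : x ≠ 0) :
    X⁻¹ x⁻¹ * (X * Y * φ) (1 - x⁻¹) = (X * Y * φ) (-1) * φ x * (Y⁻¹ x * (X * Y * φ) (1 - x)) := by
  have h1 : (1 - x⁻¹) = (-1) * (1 - x) * x⁻¹ := by field_simp; ring
  have e : ∀ χ : MulChar F ℂ, χ x⁻¹ = χ⁻¹ x := fun χ => (MulChar.inv_apply' χ x).symm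
  have e2 : X x * X⁻¹ x = 1 := by
    rw [← MulChar.mul_apply, mul_inv_cancel, MulChar.one_apply hx.isUnit]
  rw [h1, map_mul (X * Y * φ), map_mul (X * Y * φ), e, e, inv_inv, mul_inv, mul_inv, hφ]
  simp only [MulChar.mul_apply]
  linear_combination (X (-1) * Y (-1) * φ (-1) * (X (1 - x) * Y (1 - x) * φ (1 - x)) * Y⁻¹ x * φ x) * e2

lemma s7_key {F : Type*} [Field F] [Fintype F] (φ X Y : MulChar F ℂ) (hφ : φ⁻¹ = φ) :
    periodP φ [(φ, 1), (Y, φ * X⁻¹), (Y⁻¹, φ * X)] 1 =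
    periodP φ [(φ, 1), (X, φ * Y⁻¹), (X⁻¹, φ * Y)] 1 := by
  simp only [periodP, List.reverse_cons, List.reverse_nil, List.nil_append, List.cons_append,
    periodPAux, hφ, mul_one, one_mul, inv_inv]
  have a1 : Y * (φ * X) = X * Y * φ := by ac_rfl
  have a2 : X * (φ * Y) = X * Y * φ := by ac_rfl
  have a3 : Y⁻¹ * (φ * X⁻¹) = X⁻¹ * Y⁻¹ * φ := by ac_rfl
  have a4 : X⁻¹ * (φ * Y⁻¹) = X⁻¹ * Y⁻¹ * φ := by ac_rfl
  rw [a1, a2, a3, a4]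
  refine Fintype.sum_equiv (Equiv.inv F) _ _ fun x => ?_
  by_cases hx : x = 0
  · subst hx; simp [MulChar.map_zero]
  rw [Finset.mul_sum, Finset.mul_sum]
  refine Fintype.sum_equiv (Equiv.inv F) _ _ fun y => ?_
  by_cases hy : y = 0
  · subst hy; simp [MulChar.map_zero]
  simp only [Equiv.inv_apply]
  have t1 := s7_term φ X Y hφ x hx
  have t2 := s7_term φ X⁻¹ Y⁻¹ hφ y hy
  rw [inv_inv, inv_inv] at t2
  have g := s7_G φ hφ (x * y) (mul_ne_zero hx hy)
  rw [mul_inv] at g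
  rw [t1, t2, g]
  have s : (X * Y * φ) (-1) * (X⁻¹ * Y⁻¹ * φ) (-1) = 1 := by
    have : X * Y * φ * (X⁻¹ * Y⁻¹ * φ) = 1 := by
      nth_rewrite 2 [← hφ]
      rw [← mul_inv, ← mul_inv, mul_inv_cancel]
    rw [← MulChar.mul_apply, this, MulChar.one_apply (by simp)]
  have p : ∀ w : F, w ≠ 0 → φ w * φ w = 1 := fun w hw => by
    nth_rewrite 1 [← hφ]
    rw [← MulChar.mul_apply, inv_mul_cancel, MulChar.one_apply hw.isUnit]
  have px := p x hx
  have py := p y hy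
  rw [map_mul]
  generalize (∑ z : F, φ z * φ (1 - z) * φ (1 - x * y * z)) = S
  generalize (X * Y * φ) (-1) = u at *
  generalize (X⁻¹ * Y⁻¹ * φ) (-1) = v at *
  generalize (X * Y * φ) (1 - x) = m at *
  generalize (X⁻¹ * Y⁻¹ * φ) (1 - y) = n at *
  generalize φ x = a at *
  generalize φ y = b at *
  have : u * v * (a * a) * (b * b) = 1 := by rw [s, px, py]; ring
  linear_combination (-(Y⁻¹ x * m * (Y y * n * S))) * this

lemma s7_half {F : Type*} [Field F] [Fintype F] [DecidableEq F] (hodd : ringChar F ≠ 2)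
    (ω : MulChar F ℂ) (hω : ∀ χ : MulChar F ℂ, ∃ k : ℤ, χ = ω ^ k) (h : ℤ)
    (hh : (Fintype.card F : ℤ) - 1 = 2 * h) : ω ^ h = quadChar F ∧ ω ^ (2 * h) = 1 ∧
      (quadChar F)⁻¹ = quadChar F := by
  have hq : (quadChar F) ^ 2 = 1 := by
    have := (quadraticChar_isQuadratic F).comp (Int.castRingHom ℂ)
    exact this.sq_eq_one
  have hne : quadChar F ≠ 1 := by
    intro h1
    apply quadraticChar_ne_one hodd
    exact (MulChar.ringHomComp_eq_one_iff (f := Int.castRingHom ℂ) (RingHom.injective_int _)).1 h1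
  have hcard : (orderOf ω : ℤ) = 2 * h := by
    rw [orderOf_eq_card_of_forall_mem_zpowers (fun χ => by
      obtain ⟨k, hk⟩ := hω χ; exact ⟨k, hk.symm⟩),
      MulChar.card_eq_card_units_of_hasEnoughRootsOfUnity, Nat.card_eq_fintype_card,
      Fintype.card_units, ← hh, Nat.cast_sub Fintype.card_pos]
    simp
  refine ⟨?_, ?_, ?_⟩
  · obtain ⟨k, hk⟩ := hω (quadChar F)
    rw [hk] at hq hne ⊢
    rw [← zpow_natCast, ← zpow_mul, ← orderOf_dvd_iff_zpow_eq_one, hcard] at hq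
    rw [Ne, ← orderOf_dvd_iff_zpow_eq_one, hcard] at hne
    obtain ⟨m, hm⟩ := hq
    have hm' : k = h * m := by push_cast at hm; linarith

    rw [← mul_inv_eq_one, ← zpow_neg, ← zpow_add, ← orderOf_dvd_iff_zpow_eq_one, hcard]
    rcases Int.even_or_odd' m with ⟨j, rfl | rfl⟩
    · exact absurd ⟨j, by rw [hm']; ring⟩ hne
    · exact ⟨-j, by rw [hm']; ring⟩
  · rw [← orderOf_dvd_iff_zpow_eq_one, hcard]
  · rw [inv_eq_iff_mul_eq_one, ← sq, hq]

lemma s7_int (c : ℚ) (n : ℤ) (h : (c.den : ℤ) ∣ n) : ∃ a : ℤ, (n : ℚ) * c = a := by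
  obtain ⟨k, rfl⟩ := h
  refine ⟨k * c.num, ?_⟩
  push_cast
  rw [← Rat.den_mul_eq_num]
  ring

/-- For each of the seven pairs `(c,f)`, the two values
`₄ℙ₃(φ, φ, ω^{(q−1)f}, ω^{(q−1)(1−f)}; ε, ω^{(q−1)(1/2−c)}, ω^{(q−1)(1/2+c)}; 1; q)`
obtained by interchanging the roles of `c` and `f` agree.  Here `ω` is a generator of
the group of multiplicative characters of `𝔽_q^×`, `φ` is the quadratic character, and
the exponents `(q−1)f`, `(q−1)(1/2−c)`, … are integers (extracted via `Rat.num`) since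
`q ≡ 1 (mod M(c,f))`. -/
theorem statement7 (c f : ℚ)
    (hcf : (c, f) = (1/2, 1/2) ∨ (c, f) = (1/2, 1/3) ∨ (c, f) = (1/2, 1/6) ∨
      (c, f) = (1/3, 1/3) ∨ (c, f) = (1/6, 1/6) ∨ (c, f) = (1/5, 2/5) ∨
      (c, f) = (1/10, 3/10))
    {F : Type*} [Field F] [Fintype F] [DecidableEq F] (hodd : ringChar F ≠ 2)
    (hq : Fintype.card F ≡ 1
      [MOD lcd [1/2, c, 1 - c, f, 1 - f, 3/2 - c, 1/2 + c, 3/2 - f, 1/2 + f]])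
    (ω : MulChar F ℂ) (hω : ∀ χ : MulChar F ℂ, ∃ k : ℤ, χ = ω ^ k) :
    periodP (quadChar F)
        [(quadChar F, 1),
          (ω ^ (((Fintype.card F : ℚ) - 1) * f).num,
            ω ^ (((Fintype.card F : ℚ) - 1) * (1/2 - c)).num),
          (ω ^ (((Fintype.card F : ℚ) - 1) * (1 - f)).num,
            ω ^ (((Fintype.card F : ℚ) - 1) * (1/2 + c)).num)] 1
      = periodP (quadChar F)
        [(quadChar F, 1),
          (ω ^ (((Fintype.card F : ℚ) - 1) * c).num,
            ω ^ (((Fintype.card F : ℚ) - 1) * (1/2 - f)).num),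
          (ω ^ (((Fintype.card F : ℚ) - 1) * (1 - c)).num,
            ω ^ (((Fintype.card F : ℚ) - 1) * (1/2 + f)).num)] 1 := by

  set N : ℤ := (Fintype.card F : ℤ) - 1 with hN
  have hNq : (Fintype.card F : ℚ) - 1 = (N : ℚ) := by rw [hN]; push_cast; rfl
  have hd : ((lcd [1/2, c, 1 - c, f, 1 - f, 3/2 - c, 1/2 + c, 3/2 - f, 1/2 + f] : ℕ) : ℤ) ∣ N := by
    have := (Nat.modEq_iff_dvd.1 hq.symm)
    simpa [hN] using this
  have dh : ((1/2 : ℚ).den : ℤ) ∣ N := by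
    refine dvd_trans (Int.natCast_dvd_natCast.2 ?_) hd
    exact Nat.dvd_lcm_left _ _
  have dc : (c.den : ℤ) ∣ N := by
    refine dvd_trans (Int.natCast_dvd_natCast.2 ?_) hd
    exact (Nat.dvd_lcm_left _ _).trans (Nat.dvd_lcm_right _ _)
  have df : (f.den : ℤ) ∣ N := by
    refine dvd_trans (Int.natCast_dvd_natCast.2 ?_) hd
    exact (((Nat.dvd_lcm_left _ _).trans (Nat.dvd_lcm_right _ _)).trans
      (Nat.dvd_lcm_right _ _)).trans (Nat.dvd_lcm_right _ _)
  obtain ⟨h, hh⟩ := s7_int _ _ dh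
  obtain ⟨a, ha⟩ := s7_int _ _ dc
  obtain ⟨b, hb⟩ := s7_int _ _ df
  have hN2 : N = 2 * h := by
    have : (N : ℚ) = ((2 * h : ℤ) : ℚ) := by push_cast; linarith
    exact_mod_cast this
  obtain ⟨w1, w2, w3⟩ := s7_half hodd ω hω h hN2
  have e1 : ∀ (r : ℚ) (t : ℤ), (N : ℚ) * r = t → ((N : ℚ) * (1 - r)).num = 2 * h - t ∧
      ((N : ℚ) * (1/2 - r)).num = h - t ∧ ((N : ℚ) * (1/2 + r)).num = h + t ∧
      ((N : ℚ) * r).num = t := by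
    intro r t hr
    have q1 : (N : ℚ) * (1 - r) = ((2 * h - t : ℤ) : ℚ) := by push_cast; linarith
    have q2 : (N : ℚ) * (1/2 - r) = ((h - t : ℤ) : ℚ) := by push_cast; linarith
    have q3 : (N : ℚ) * (1/2 + r) = ((h + t : ℤ) : ℚ) := by push_cast; linarith
    rw [q1, q2, q3, hr]
    exact ⟨Rat.num_intCast _, Rat.num_intCast _, Rat.num_intCast _, Rat.num_intCast _⟩
  obtain ⟨c1, c2, c3, c4⟩ := e1 c a ha
  obtain ⟨f1, f2, f3, f4⟩ := e1 f b hb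
  rw [hNq, c1, c2, c3, c4, f1, f2, f3, f4]
  simp only [zpow_sub, zpow_add, w1, w2, one_mul]
  exact s7_key _ _ _ w3
end

section
/- Let 𝔽_q be a finite field of odd characteristic with quadratic character φ. Then ∑_{χ} χ(−1) · J(φχ, χ̄) = 0, where the sum runs over all multiplicative characters χ of 𝔽_q^×. (This is the key vanishing identity showing that the Beukers–Cohen–Mellit hypergeometric sum H_p({1/2,1/6,5/6},{1,4/3,2/3};1) vanishes at primes p ≡ 2 (mod 3).) -/
lemma sum_mulChar_eq_zero {F : Type*} [Field F] [Fintype F]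
    [Fintype (MulChar F ℂ)] {a : F} (ha : a ≠ 1) : ∑ χ : MulChar F ℂ, χ a = 0 := by
  obtain ⟨ψ, hψ⟩ := MulChar.exists_apply_ne_one_of_hasEnoughRootsOfUnity F ℂ ha
  have h : ψ a * ∑ χ : MulChar F ℂ, χ a = ∑ χ : MulChar F ℂ, χ a := by
    rw [Finset.mul_sum, ← Equiv.sum_comp (Equiv.mulLeft ψ) (fun χ : MulChar F ℂ => χ a)]
    simp
  have h2 : (ψ a - 1) * ∑ χ : MulChar F ℂ, χ a = 0 := by rw [sub_mul, h]; ring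
  exact (mul_eq_zero.mp h2).resolve_left (sub_ne_zero.mpr hψ)

/-- The vanishing identity `∑_χ χ(−1)·J(φχ, χ̄) = 0`, where the sum runs over all
multiplicative characters `χ` of a finite field of odd characteristic and `φ` is the
quadratic character. -/
theorem statement8 {F : Type*} [Field F] [Fintype F] [DecidableEq F]
    [Fintype (MulChar F ℂ)] (hodd : ringChar F ≠ 2) :
    ∑ χ : MulChar F ℂ, χ (-1) * jacobiSum (quadChar F * χ) χ⁻¹ = 0 := by
  simp only [jacobiSum, Finset.mul_sum]
  rw [Finset.sum_comm]
  refine Finset.sum_eq_zero fun t _ => ?_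
  have key : ∀ χ : MulChar F ℂ, χ (-1) * ((quadChar F * χ) t * χ⁻¹ (1 - t))
      = quadChar F t * χ (-t * (1 - t)⁻¹) := by
    intro χ
    rw [MulChar.mul_apply, MulChar.inv_apply', map_mul, neg_eq_neg_one_mul t, map_mul]
    ring
  simp only [key]
  rw [← Finset.mul_sum, sum_mulChar_eq_zero, mul_zero]
  intro h
  by_cases ht : 1 - t = 0
  · simp [ht] at h
  · have h3 : -t = 1 - t := by
      rw [← mul_inv_eq_one₀ ht]; exact h
    have : (1 : F) = 0 := by linear_combination -h3
    exact one_ne_zero this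
end

section
/- There exists δ > 0 such that for every real number x with |x| < δ, one has ₃F₂(1/2, 1/6, 5/6; 4/3, 2/3; x(x+4)³/(4(2x−1)³)) = 4(1−2x)^{1/2}/(4+x), where (1−2x)^{1/2} denotes the positive square root. -/
open Complex Real

/-- The Pochhammer symbol `(a)ₖ = a(a+1)⋯(a+k−1)`. -/
noncomputable def poch (a : ℂ) (k : ℕ) : ℂ := ∏ i ∈ Finset.range k, (a + i)

/-- The generalized hypergeometric series
`ₙFₙ₋₁(a₁,…,aₙ; b₂,…,bₙ; z) = ∑ₖ (a₁)ₖ⋯(aₙ)ₖ / ((1)ₖ(b₂)ₖ⋯(bₙ)ₖ) · zᵏ`. -/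
noncomputable def hypF (upper lower : List ℂ) (z : ℂ) : ℂ :=
  ∑' k : ℕ, (upper.map fun a => poch a k).prod
    / (poch 1 k * (lower.map fun b => poch b k).prod) * z ^ k

open Filter Topology in
/-- `f` is given near zero by the power series with coefficients `c`. -/
def PSer (f : ℝ → ℝ) (c : ℕ → ℝ) : Prop :=
  ∀ᶠ w in 𝓝 (0:ℝ), HasSum (fun n => c n * w ^ n) (f w)

namespace PSer
open Filter Topology

lemma iff_fps {f : ℝ → ℝ} {c : ℕ → ℝ} :
    PSer f c ↔ HasFPowerSeriesAt f (FormalMultilinearSeries.ofScalars ℝ c) 0 := by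
  rw [hasFPowerSeriesAt_iff]
  simp only [PSer, FormalMultilinearSeries.coeff_ofScalars, zero_add, smul_eq_mul, mul_comm]

lemma unique {f : ℝ → ℝ} {c d : ℕ → ℝ} (h : PSer f c) (h' : PSer f d) : c = d := by
  have := (iff_fps.1 h).eq_formalMultilinearSeries (iff_fps.1 h')
  ext n
  simpa [FormalMultilinearSeries.coeff_ofScalars] using congrArg (fun p => p.coeff n) this

lemma of_analytic {f : ℝ → ℝ} (h : AnalyticAt ℝ f 0) :
    PSer f (fun n => iteratedDeriv n f 0 / n.factorial) :=
  iff_fps.2 h.hasFPowerSeriesAt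

lemma congr {f g : ℝ → ℝ} {c : ℕ → ℝ} (h : PSer f c) (e : f =ᶠ[𝓝 0] g) : PSer g c := by
  filter_upwards [h, e] with w h1 h2
  rwa [← h2]

lemma add {f g : ℝ → ℝ} {c d : ℕ → ℝ} (h : PSer f c) (h' : PSer g d) :
    PSer (fun w => f w + g w) (fun n => c n + d n) := by
  filter_upwards [h, h'] with w h1 h2
  simpa only [add_mul] using h1.add h2

lemma smul {f : ℝ → ℝ} {c : ℕ → ℝ} (a : ℝ) (h : PSer f c) :
    PSer (fun w => a * f w) (fun n => a * c n) := by
  filter_upwards [h] with w h1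
  simpa only [mul_assoc] using h1.mul_left a

lemma shift {f : ℝ → ℝ} {c d : ℕ → ℝ} (h : PSer f c) (d0 : d 0 = 0) (hd : ∀ n, d (n+1) = c n) :
    PSer (fun w => w * f w) d := by
  filter_upwards [h] with w h1
  rw [← hasSum_nat_add_iff' 1]
  have := h1.mul_left w
  simp only [Finset.range_one, Finset.sum_singleton, d0, hd, zero_mul, sub_zero]
  have e : (fun n => c n * w ^ (n+1)) = fun n => w * (c n * w ^ n) := by
    funext n
    ring
  rw [e]
  exact this

lemma theta {f g : ℝ → ℝ} {c : ℕ → ℝ} (hf : AnalyticAt ℝ f 0) (h : PSer f c)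
    (e : ∀ᶠ w in 𝓝 (0:ℝ), w * deriv f w = g w) : PSer g (fun n => n * c n) := by
  have hc := h.unique (of_analytic hf)
  refine (shift (of_analytic hf.deriv) (by simp) ?_).congr e
  intro n
  rw [hc, ← iteratedDeriv_succ']
  beta_reduce
  rw [Nat.factorial_succ]
  push_cast
  have : (n.factorial : ℝ) ≠ 0 := by positivity
  field_simp

end PSer

noncomputable section
namespace S9
open Filter Topology

def q (x : ℝ) : ℝ := x^2 - 10*x - 2
def gg (x : ℝ) : ℝ := 4 * Real.sqrt (1 - 2*x) / (4 + x)
def zz (x : ℝ) : ℝ := (x * (x+4)^3) / (4 * (2*x-1)^3)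
def N1 (x : ℝ) : ℝ := x*(5-x)/2
def N1' (x : ℝ) : ℝ := (5-2*x)/2
def N2 (x : ℝ) : ℝ := N1 x * N1 x * q x
  + x*(x+4)*(2*x-1)/2 * (N1' x * q x - 1 * N1 x * (2*x-10))
def N2' (x : ℝ) : ℝ := N1' x * N1 x * q x + N1 x * N1' x * q x + N1 x * N1 x * (2*x-10)
  + ((6*x^2+14*x-4)/2 * (N1' x * q x - 1 * N1 x * (2*x-10))
  + x*(x+4)*(2*x-1)/2 * (-1 * q x + N1' x * (2*x-10) - (1 * N1' x * (2*x-10) + 1 * N1 x * 2)))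
def N3 (x : ℝ) : ℝ := N1 x * N2 x * q x
  + x*(x+4)*(2*x-1)/2 * (N2' x * q x - 3 * N2 x * (2*x-10))

lemma dq (x : ℝ) : HasDerivAt q (2*x-10) x := by
  have := (((hasDerivAt_id x).pow 2).sub ((hasDerivAt_id x).const_mul 10)).sub_const 2
  refine this.congr_deriv ?_
  simp

lemma dN1 (x : ℝ) : HasDerivAt N1 (N1' x) x := by
  have := ((hasDerivAt_id x).mul ((hasDerivAt_id x).const_sub 5)).div_const 2
  refine this.congr_deriv ?_
  simp [N1']; ring

lemma dN1' (x : ℝ) : HasDerivAt N1' (-1) x := by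
  have := (((hasDerivAt_id x).const_mul 2).const_sub 5).div_const 2
  refine this.congr_deriv ?_
  simp

lemma dp (x : ℝ) : HasDerivAt (fun x : ℝ => x*(x+4)*(2*x-1)/2) ((6*x^2+14*x-4)/2) x := by
  have := (((hasDerivAt_id x).mul ((hasDerivAt_id x).add_const 4)).mul
    (((hasDerivAt_id x).const_mul 2).sub_const 1)).div_const 2
  refine this.congr_deriv ?_
  simp; ring

lemma dl (x : ℝ) : HasDerivAt (fun x : ℝ => 2*x-10) 2 x := by
  simpa using ((hasDerivAt_id x).const_mul 2).sub_const 10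

lemma dN2 (x : ℝ) : HasDerivAt N2 (N2' x) x := by
  have := (((dN1 x).mul (dN1 x)).mul (dq x)).add
    ((dp x).mul (((dN1' x).mul (dq x)).sub (((dN1 x).const_mul 1).mul (dl x))))
  refine this.congr_deriv ?_
  simp [N2']; ring

lemma dgg {x : ℝ} (hx : |x| < 1/10) :
    HasDerivAt gg (gg x * (-(5-x)/((1-2*x)*(4+x)))) x := by
  rw [abs_lt] at hx
  have h1 : 0 < 1 - 2*x := by linarith
  have h2 : 0 < 4 + x := by linarith
  have h := ((((((hasDerivAt_id x).const_mul 2).const_sub 1).sqrt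
    (by simpa using h1.ne')).const_mul 4).div ((hasDerivAt_id x).const_add 4) h2.ne')
  refine h.congr_deriv ?_
  simp only [gg, id]
  have hs : 0 < Real.sqrt (1-2*x) := Real.sqrt_pos.2 h1
  have hs2 : 1 - 2*x = Real.sqrt (1-2*x)^2 := (Real.sq_sqrt h1.le).symm
  generalize Real.sqrt (1-2*x) = s at *
  have hxs : x = (1 - s^2)/2 := by linarith
  rw [hs2]
  field_simp
  rw [hxs]
  ring

lemma q_ne {x : ℝ} (hx : |x| < 1/10) : q x ≠ 0 := by
  rw [abs_lt] at hx
  have : q x < 0 := by unfold q; nlinarith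
  exact this.ne

def H (N : ℝ → ℝ) (m : ℕ) (x : ℝ) : ℝ := gg x * (N x / q x ^ m)

lemma dH {N N' : ℝ → ℝ} (hN : ∀ x, HasDerivAt N (N' x) x) (m : ℕ) {x : ℝ} (hx : |x| < 1/10) :
    HasDerivAt (H N m) (gg x * (-(5-x)/((1-2*x)*(4+x)) * (N x / q x ^ m)
      + (N' x * q x - m * N x * (2*x-10)) / q x ^(m+1))) x := by
  have hq := q_ne hx
  have h := (dgg hx).mul ((hN x).div ((dq x).pow m) (pow_ne_zero m hq))
  refine h.congr_deriv ?_
  rcases m with _ | m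
  · simp; field_simp
  · simp only [Nat.add_sub_cancel, Pi.pow_apply, Pi.div_apply]
    field_simp
    ring

lemma dzz {x : ℝ} (hx : |x| < 1/10) :
    HasDerivAt zz ((x+4)^2 * q x / (2 * (2*x-1)^4)) x := by
  rw [abs_lt] at hx
  have h1 : 2*x - 1 ≠ 0 := by linarith
  have ha' : x * 2 - 1 ≠ 0 := by linarith
  have h := ((hasDerivAt_id x).mul (((hasDerivAt_id x).add_const 4).pow 3)).div
    (((((hasDerivAt_id x).const_mul 2).sub_const 1).pow 3).const_mul 4)
    (by simpa using h1)
  refine h.congr_deriv ?_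
  simp [q]
  field_simp
  ring

lemma small : ∀ᶠ x in 𝓝 (0:ℝ), |x| < 1/10 := by
  have : Tendsto (fun x : ℝ => |x|) (𝓝 0) (𝓝 |0|) := continuous_abs.tendsto 0
  exact this.eventually (gt_mem_nhds (by norm_num))

lemma agg : AnalyticAt ℝ gg 0 := by
  unfold gg
  have : AnalyticAt ℝ (fun x : ℝ => Real.sqrt (1-2*x)) 0 := by
    have e : AnalyticAt ℝ (fun x : ℝ => Real.exp (Real.log (1 - 2*x) / 2)) 0 := by
      have : AnalyticAt ℝ (fun x : ℝ => 1 - 2*x) 0 := by fun_prop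
      have h2 : AnalyticAt ℝ (fun x : ℝ => Real.log (1 - 2*x)) 0 := this.log (by norm_num)
      fun_prop
    refine e.congr ?_
    filter_upwards [small] with x hx
    rw [abs_lt] at hx
    have h1 : 0 < 1 - 2*x := by linarith
    rw [← Real.log_sqrt h1.le, Real.exp_log (Real.sqrt_pos.2 h1)]
  exact (analyticAt_const.mul this).div (by fun_prop) (by norm_num)

lemma aq : AnalyticAt ℝ q 0 := by unfold q; fun_prop

lemma aH {N : ℝ → ℝ} (hN : AnalyticAt ℝ N 0) (m : ℕ) : AnalyticAt ℝ (H N m) 0 :=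
  agg.mul (hN.div (aq.pow m) (pow_ne_zero m (q_ne (by norm_num))))

lemma azz : AnalyticAt ℝ zz 0 := by
  unfold zz
  exact AnalyticAt.div (by fun_prop) (by fun_prop) (by norm_num)

lemma zz0 : zz 0 = 0 := by simp [zz]

lemma exists_inv : ∃ X : ℝ → ℝ, X 0 = 0 ∧ AnalyticAt ℝ X 0 ∧ (∀ᶠ x in 𝓝 0, X (zz x) = x) ∧
    (∀ᶠ w in 𝓝 0, zz (X w) = w) := by
  have hd : deriv zz 0 ≠ 0 := by
    rw [(dzz (x := 0) (by norm_num)).deriv]; norm_num [q]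
  have h1 := HasStrictDerivAt.eventually_left_inverse azz.hasStrictDerivAt hd
  refine ⟨azz.hasStrictDerivAt.localInverse _ _ _ hd, ?_, ?_, h1, ?_⟩
  · have := h1.self_of_nhds
    rwa [zz0] at this
  · have := azz.analyticAt_localInverse hd
    rwa [zz0] at this
  · have := HasStrictDerivAt.eventually_right_inverse azz.hasStrictDerivAt hd
    rwa [zz0] at this

lemma thetaX {X : ℝ → ℝ} (X0 : X 0 = 0) (aX : AnalyticAt ℝ X 0)
    (hX : ∀ᶠ w in 𝓝 0, zz (X w) = w) :
    ∀ᶠ w in 𝓝 0, |X w| < 1/10 ∧ ∃ X', HasDerivAt X X' w ∧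
      w * X' = X w * (X w + 4) * (2 * X w - 1) / (2 * q (X w)) := by
  have t : Tendsto X (𝓝 0) (𝓝 0) := by
    have := aX.continuousAt.tendsto; rwa [X0] at this
  filter_upwards [t.eventually small, hX.eventually_nhds, aX.eventually_analyticAt] with w h1 h2 h3
  refine ⟨h1, deriv X w, h3.differentiableAt.hasDerivAt, ?_⟩
  have h4 := (dzz h1).comp w h3.differentiableAt.hasDerivAt
  have h5 : HasDerivAt (zz ∘ X) 1 w := (hasDerivAt_id w).congr_of_eventuallyEq h2
  have h6 := h4.unique h5
  have h7 := h2.self_of_nhds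
  have hq := q_ne h1
  rw [abs_lt] at h1
  have ha : 2 * X w - 1 ≠ 0 := by linarith
  have ha' : X w * 2 - 1 ≠ 0 := by linarith
  have hb : X w + 4 ≠ 0 := by linarith
  generalize deriv X w = D at *
  generalize X w = x at *
  rw [← h7, zz]
  have : D = 2 * (2*x-1)^4 / ((x+4)^2 * q x) := by
    field_simp
    field_simp at h6
    linarith
  rw [this]
  field_simp
  ring

lemma step {X : ℝ → ℝ} (X0 : X 0 = 0) (aX : AnalyticAt ℝ X 0)
    (hX : ∀ᶠ w in 𝓝 0, zz (X w) = w) {N N' M : ℝ → ℝ} (hN : ∀ x, HasDerivAt N (N' x) x)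
    (aN : AnalyticAt ℝ N 0) (m k : ℕ)
    (hM : ∀ x, q x ≠ 0 → M x / q x ^ k = N1 x / q x * (N x / q x ^ m)
      + x*(x+4)*(2*x-1)/(2 * q x) * ((N' x * q x - m * N x * (2*x-10)) / q x ^(m+1)))
    {c : ℕ → ℝ} (hc : PSer (fun w => H N m (X w)) c) :
    PSer (fun w => H M k (X w)) (fun n => n * c n) := by
  have a : AnalyticAt ℝ (fun w => H N m (X w)) 0 := by
    have := aH aN m
    rw [← X0] at this
    exact this.comp aX
  refine hc.theta a ?_
  filter_upwards [thetaX X0 aX hX] with w ⟨h1, X', h2, h3⟩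
  have h4 := (dH hN m h1).comp w h2
  have h5 : deriv (fun w => H N m (X w)) w = _ := h4.deriv
  have hq := q_ne h1
  rw [h5, mul_comm _ X', ← mul_assoc, h3, H, hM _ hq, N1]
  rw [abs_lt] at h1
  have ha : 1 - 2 * X w ≠ 0 := by linarith
  have ha' : 1 - X w * 2 ≠ 0 := by linarith
  have hb : 4 + X w ≠ 0 := by linarith
  generalize X w = x at *
  generalize (N' x * q x - m * N x * (2*x-10)) / q x ^(m+1) = A
  generalize N x / q x ^ m = B
  field_simp
  ring

lemma main_id (x : ℝ) (hx : |x| < 1/10) :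
    H N3 5 x + (-1/9) * H N1 1 x = zz x * (H N3 5 x + ((3/2) * H N2 3 x +
      ((23/36) * H N1 1 x + (5/72) * H (fun _ => 1) 0 x))) := by
  have hq := q_ne hx
  rw [abs_lt] at hx
  have ha : 2 * x - 1 ≠ 0 := by linarith
  have ha' : x * 2 - 1 ≠ 0 := by linarith
  simp only [H, zz]
  have key : N3 x / q x ^ 5 + (-1/9) * (N1 x / q x ^ 1) =
    (x * (x+4)^3) / (4 * (2*x-1)^3) * (N3 x / q x ^ 5 + ((3/2) * (N2 x / q x ^ 3) +
      ((23/36) * (N1 x / q x ^ 1) + (5/72) * (1 / q x ^ 0)))) := by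
    field_simp
    simp only [N3, N2', N2, N1, N1', q]
    ring
  linear_combination gg x * key

lemma rec {X : ℝ → ℝ} (X0 : X 0 = 0) (aX : AnalyticAt ℝ X 0)
    (hX : ∀ᶠ w in 𝓝 0, zz (X w) = w) {c : ℕ → ℝ} (hc : PSer (fun w => gg (X w)) c) (n : ℕ) :
    (n+1) * (n + 4/3) * (n+2/3) * c (n+1) = (n+1/2) * (n+1/6) * (n+5/6) * c n := by
  have h0 : PSer (fun w => H (fun _ => 1) 0 (X w)) c := by simpa [H] using hc
  have h1 : PSer (fun w => H N1 1 (X w)) _ :=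
    step X0 aX hX (N' := fun _ => 0) (fun x => hasDerivAt_const x 1) analyticAt_const 0 1
      (by intro x hx; simp) h0
  have h2 : PSer (fun w => H N2 3 (X w)) _ :=
    step X0 aX hX dN1 (by unfold N1; fun_prop) 1 3
      (by intro x hx; rw [N2]; field_simp; push_cast; ring) h1
  have h3 : PSer (fun w => H N3 5 (X w)) _ :=
    step X0 aX hX dN2 (by unfold N2 N1 N1' q; fun_prop) 3 5
      (by intro x hx; rw [N3]; field_simp; push_cast; ring) h2
  have hl := h3.add (h1.smul (-1/9))
  have hr := h3.add ((h2.smul (3/2)).add ((h1.smul (23/36)).add (h0.smul (5/72))))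
  let d : ℕ → ℝ := fun n => Nat.casesOn n 0 (fun n => n * (n * (n * c n)) +
      (3/2 * (n * (n * c n)) + (23/36 * (n * c n) + 5/72 * c n)))
  have hr' := hr.shift (d := d) rfl (fun n => rfl)
  have e := (hl.congr ?_).unique hr'
  · have := congrFun e (n+1)
    simp only [d] at this
    push_cast at this
    linear_combination this
  · filter_upwards [thetaX X0 aX hX, hX] with w h1 h2
    have := main_id _ h1.1
    rw [h2] at this
    exact this

end S9
end

open Filter Topology in
theorem S9.coef (c : ℕ → ℝ) (c0 : c 0 = 1)
    (h : ∀ n : ℕ, (n+1) * (n + 4/3) * (n+2/3) * c (n+1) = (n+1/2) * (n+1/6) * (n+5/6) * c n)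
    (k : ℕ) : (c k : ℂ) = ([1/2, 1/6, 5/6].map fun a => poch a k).prod
    / (poch 1 k * ([4/3, 2/3].map fun b => poch b k).prod) := by
  induction k with
  | zero => simp [poch, c0]
  | succ n ih =>
    have h1 : c (n+1) = c n * ((n+1/2) * (n+1/6) * (n+5/6) / ((n+1) * (n + 4/3) * (n+2/3))) := by
      have := h n
      field_simp
      field_simp at this
      linarith
    have e : ∀ a, poch a (n+1) = poch a n * (a + n) := fun a => by
      simp [poch, Finset.prod_range_succ]
    rw [h1]
    push_cast
    rw [ih]
    simp only [List.map_cons, List.map_nil, List.prod_cons, List.prod_nil, e]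
    rw [div_mul_div_comm]
    congr 1 <;> ring

theorem statement9 : ∃ δ > (0 : ℝ), ∀ x : ℝ, |x| < δ →
    hypF [1/2, 1/6, 5/6] [4/3, 2/3]
        (((x : ℂ) * ((x : ℂ) + 4) ^ 3) / (4 * (2 * (x : ℂ) - 1) ^ 3))
      = ((4 * Real.sqrt (1 - 2 * x) / (4 + x) : ℝ) : ℂ) := by
  obtain ⟨X, X0, aX, hl, hr⟩ := S9.exists_inv
  have aG : AnalyticAt ℝ (fun w => S9.gg (X w)) 0 := by
    have := S9.agg
    rw [← X0] at this
    exact this.comp aX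
  have hc := PSer.of_analytic aG
  have hrec := S9.rec X0 aX hr hc
  have hcoef := S9.coef
    (fun n => iteratedDeriv n (fun w => S9.gg (X w)) 0 / n.factorial) (by simp [X0, S9.gg]) hrec
  have t : Filter.Tendsto S9.zz (nhds 0) (nhds 0) := by
    have := S9.azz.continuousAt.tendsto; rwa [S9.zz0] at this
  have ev := (t.eventually hc).and hl
  obtain ⟨δ, hδ, H⟩ := Metric.eventually_nhds_iff.1 ev
  refine ⟨δ, hδ, fun x hx => ?_⟩
  obtain ⟨h1, h2⟩ := H (y := x) (by simpa using hx)
  beta_reduce at h1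
  rw [h2] at h1
  have h3 := (Complex.hasSum_ofReal.2 h1).tsum_eq
  rw [hypF]
  change _ = ((S9.gg x : ℝ) : ℂ)
  rw [← h3]
  refine tsum_congr fun k => ?_
  rw [← hcoef k]
  simp [S9.zz]
end

section
/- There exists δ > 0 such that for every real number x with |x| < δ, one has ₂F₁(1/4, 7/12; 4/3; x(x+4)³/(4(2x−1)³)) = 4(1−2x)^{3/4}/(4+x), where (1−2x)^{3/4} denotes the positive real power. -/
open Complex Real

open Filter Topology

lemma ps_summable (a : ℕ → ℂ) (C : ℝ) (m : ℕ) (h : ∀ k, ‖a k‖ ≤ C * ((k:ℝ)+1)^m)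
    (r : ℝ) (hr0 : 0 ≤ r) (hr : r < 1) : Summable (fun k => ‖a k‖ * r ^ k) := by
  rcases hr0.eq_or_lt with h0 | hpos
  · subst h0
    apply summable_of_ne_finset_zero (s := {0})
    intro b hb
    have : b ≠ 0 := by simpa using hb
    simp [this]
  have h1 : Summable (fun n : ℕ => ((n:ℝ))^m * r ^ n) :=
    summable_pow_mul_geometric_of_norm_lt_one m (by rwa [Real.norm_of_nonneg hr0])
  have h2 := ((summable_nat_add_iff 1).2 h1).mul_left (C / r)
  refine Summable.of_nonneg_of_le (fun k => by positivity) (fun k => ?_) h2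
  have := mul_le_mul_of_nonneg_right (h k) (pow_nonneg hr0 k)
  refine this.trans (le_of_eq ?_)
  push_cast
  field_simp
  ring

lemma ps_hasSum (a : ℕ → ℂ) (C : ℝ) (m : ℕ) (h : ∀ k, ‖a k‖ ≤ C * ((k:ℝ)+1)^m)
    (z : ℂ) (hz : ‖z‖ < 1) : Summable (fun k => a k * z ^ k) := by
  apply Summable.of_norm
  simpa using ps_summable a C m h ‖z‖ (norm_nonneg _) hz

lemma ps_next (a : ℕ → ℂ) (C : ℝ) (m : ℕ) (h : ∀ k, ‖a k‖ ≤ C * ((k:ℝ)+1)^m) (k : ℕ) :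
    ‖((k:ℂ)+1) * a (k+1)‖ ≤ (C * 2^m) * ((k:ℝ)+1)^(m+1) := by
  have hC : 0 ≤ C := by
    have := (norm_nonneg _).trans (h 0)
    simpa using this
  have h1 : ‖(k:ℂ)+1‖ = (k:ℝ)+1 := by
    rw [← Nat.cast_add_one, Complex.norm_natCast]; push_cast; rfl
  rw [norm_mul, h1]
  have h2 := h (k+1)
  push_cast at h2
  have h3 : ((k:ℝ)+1+1)^m ≤ (2*((k:ℝ)+1))^m := by
    apply pow_le_pow_left₀ (by positivity)
    have : (0:ℝ) ≤ k := by positivity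
    linarith
  calc ((k:ℝ)+1) * ‖a (k+1)‖ ≤ ((k:ℝ)+1) * (C * (2*((k:ℝ)+1))^m) := by
        gcongr; exact h2.trans (by gcongr)
    _ = _ := by rw [mul_pow]; ring

lemma ps_deriv (a : ℕ → ℂ) (C : ℝ) (m : ℕ) (h : ∀ k, ‖a k‖ ≤ C * ((k:ℝ)+1)^m)
    (z : ℂ) (hz : ‖z‖ < 1) :
    HasDerivAt (fun w => ∑' k, a k * w ^ k) (∑' k : ℕ, (((k:ℂ)+1) * a (k+1)) * z ^ k) z := by
  obtain ⟨r, hr1, hr2⟩ := exists_between hz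
  have hr0 : 0 ≤ r := (norm_nonneg _).trans hr1.le
  have hs := ps_summable _ _ _ (ps_next a C m h) r hr0 hr2
  have hu : Summable (fun k : ℕ => ‖a k‖ * ((k:ℝ) * r ^ (k-1))) := by
    rw [← summable_nat_add_iff 1]
    refine hs.congr (fun k => ?_)
    have h1 : ‖(k:ℂ)+1‖ = (k:ℝ)+1 := by
      rw [← Nat.cast_add_one, Complex.norm_natCast]; push_cast; rfl
    rw [norm_mul, h1]
    simp only [Nat.add_sub_cancel]
    push_cast
    ring
  have key := hasDerivAt_tsum_of_isPreconnected (𝕜 := ℂ) (g := fun k w => a k * w ^ k)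
    (g' := fun k w => a k * ((k:ℂ) * w ^ (k-1))) (t := Metric.ball 0 r) (y₀ := 0) (y := z)
    hu Metric.isOpen_ball (convex_ball 0 r).isPreconnected
    (fun n y _ => (hasDerivAt_pow n y).const_mul (a n))
    (fun n y hy => by
      have hy' : ‖y‖ ≤ r := by simpa using (Metric.mem_ball.1 hy).le
      rw [norm_mul, norm_mul, norm_pow, Complex.norm_natCast]
      gcongr)
    (by simpa using lt_of_le_of_lt (norm_nonneg _) hr1)
    (ps_hasSum a C m h 0 (by simp))
    (by simpa using hr1)
  refine key.congr_deriv ?_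
  have hsum : Summable (fun k : ℕ => a k * ((k:ℂ) * z ^ (k-1))) := by
    refine Summable.of_norm_bounded hu (fun k => ?_)
    rw [norm_mul, norm_mul, norm_pow, Complex.norm_natCast]
    gcongr
  rw [hsum.tsum_eq_zero_add]
  simp only [Nat.cast_zero, zero_mul, mul_zero, zero_add]
  refine tsum_congr (fun k => ?_)
  simp only [Nat.add_sub_cancel]
  push_cast
  ring

lemma ps_shift (a : ℕ → ℂ) (z S : ℂ) (h : HasSum (fun k => a (k+1) * z ^ k) S) (h0 : a 0 = 0) :
    HasSum (fun k => a k * z ^ k) (z * S) := by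
  rw [← hasSum_nat_add_iff' 1]
  simp only [Finset.range_one, Finset.sum_singleton, h0, zero_mul, sub_zero]
  have e : (fun k => a (k+1) * z ^ (k+1)) = fun k => z * (a (k+1) * z ^ k) := by
    funext k
    ring
  rw [e]
  exact h.mul_left z

noncomputable def cc (k : ℕ) : ℂ := poch (1/4) k * poch (7/12) k / (poch 1 k * poch (4/3) k)

lemma nat_add_ne (k : ℕ) (q : ℝ) (hq : 0 < q) : (q : ℂ) + k ≠ 0 := by
  have : (q + k : ℝ) ≠ 0 := by positivity
  exact_mod_cast this

lemma poch_ne (q : ℝ) (hq : 0 < q) (k : ℕ) : poch q k ≠ 0 :=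
  Finset.prod_ne_zero_iff.2 fun i _ => nat_add_ne i q hq

lemma cc_rec (k : ℕ) : ((1:ℂ)+k) * (4/3+k) * cc (k+1) = (1/4+k) * (7/12+k) * cc k := by
  have h1 := poch_ne 1 one_pos k
  have h2 := poch_ne (4/3) (by norm_num) k
  have h3 := nat_add_ne k 1 one_pos
  have h4 := nat_add_ne k (4/3) (by norm_num)
  push_cast at h1 h2 h3 h4
  have hp : ∀ a, poch a (k+1) = poch a k * (a + k) := fun a => Finset.prod_range_succ _ _
  simp only [cc, hp]
  generalize poch 1 k = A at *
  generalize poch (4/3) k = B at *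
  generalize poch (1/4) k = D at *
  generalize poch (7/12) k = E at *
  generalize hu : (1:ℂ) + k = u at *
  generalize hv : (4/3:ℂ) + k = v at *
  field_simp

lemma cc_bound (k : ℕ) : ‖cc k‖ ≤ 1 * ((k:ℝ)+1)^0 := by
  simp only [pow_zero, mul_one]
  induction k with
  | zero => simp [cc, poch]
  | succ k ih =>
    have h := congrArg norm (cc_rec k)
    have e : ∀ q : ℝ, 0 < q → ‖(q:ℂ) + k‖ = q + k := fun q hq => by
      rw [← Complex.ofReal_natCast, ← Complex.ofReal_add, Complex.norm_of_nonneg (by positivity)]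
    have e1 := e 1 one_pos
    have e2 := e (4/3) (by norm_num)
    have e3 := e (1/4) (by norm_num)
    have e4 := e (7/12) (by norm_num)
    push_cast at e1 e2 e3 e4
    simp only [norm_mul, e1, e2, e3, e4] at h
    have hk : (0:ℝ) ≤ k := by positivity
    have hp : 0 < (1+(k:ℝ)) * (4/3+k) := by positivity
    have : (1+(k:ℝ)) * (4/3+k) * ‖cc (k+1)‖ ≤ (1+(k:ℝ)) * (4/3+k) * 1 := by
      rw [h]
      have : (1/4+(k:ℝ)) * (7/12+k) ≤ (1+(k:ℝ)) * (4/3+k) := by nlinarith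
      exact mul_le_mul this ih (norm_nonneg _) hp.le
    exact le_of_mul_le_mul_left this hp

noncomputable def F0 (z : ℂ) : ℂ := ∑' k, cc k * z ^ k
noncomputable def F1 (z : ℂ) : ℂ := ∑' k : ℕ, (((k:ℂ)+1) * cc (k+1)) * z ^ k
noncomputable def F2 (z : ℂ) : ℂ := ∑' k : ℕ, (((k:ℂ)+1) * ((((k+1:ℕ):ℂ)+1) * cc (k+1+1))) * z ^ k

lemma F0_deriv (z : ℂ) (hz : ‖z‖ < 1) : HasDerivAt F0 (F1 z) z :=
  ps_deriv cc 1 0 cc_bound z hz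

lemma F1_deriv (z : ℂ) (hz : ‖z‖ < 1) : HasDerivAt F1 (F2 z) z :=
  ps_deriv _ _ _ (ps_next cc 1 0 cc_bound) z hz

lemma F_ode (z : ℂ) (hz : ‖z‖ < 1) :
    z * (1 - z) * F2 z + (4/3 - 11/6 * z) * F1 z - 7/48 * F0 z = 0 := by
  have b1 := ps_next cc 1 0 cc_bound
  have h0 : HasSum _ (F0 z) := (ps_hasSum _ _ _ cc_bound z hz).hasSum
  have h1 : HasSum _ (F1 z) := (ps_hasSum _ _ _ b1 z hz).hasSum
  have h2 : HasSum _ (F2 z) := (ps_hasSum _ _ _ (ps_next _ _ _ b1) z hz).hasSum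
  have h1z := ps_shift (fun k => (k:ℂ) * cc k) z (F1 z) (by simpa using h1) (by simp)
  have h2z := ps_shift (fun k => (k:ℂ) * (((k:ℂ)+1) * cc (k+1))) z (F2 z) (by simpa using h2) (by simp)
  have h2zz := ps_shift (fun k => (k:ℂ) * (((k:ℂ)-1) * cc k)) z (z * F2 z)
    (by convert h2z using 2 with k; push_cast; ring) (by simp)
  have key := (((h2z.sub h2zz).add (h1.mul_left (4/3))).sub (h1z.mul_left (11/6))).sub
    (h0.mul_left (7/48))
  have hz0 := key.unique (by
    convert hasSum_zero using 1
    funext k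
    have := cc_rec k
    linear_combination z ^ k * this)
  linear_combination hz0

lemma ode_unique (W W1 W2 Q R : ℂ → ℂ) (hW : ∀ᶠ x in 𝓝 0, HasDerivAt W (W1 x) x)
    (hW1 : ∀ᶠ x in 𝓝 0, HasDerivAt W1 (W2 x) x)
    (hQ : ContinuousAt Q 0) (hR : ContinuousAt R 0) (hQ0 : Q 0 = 4/3) (h0 : W 0 = 0)
    (hode : ∀ᶠ x in 𝓝 0, x * W2 x + Q x * W1 x + R x * W x = 0) : ∀ᶠ x in 𝓝 0, W x = 0 := by
  have hA : AnalyticAt ℂ W 0 := Complex.analyticAt_iff_eventually_differentiableAt.2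
    (hW.mono fun x hx => hx.differentiableAt)
  by_contra hne
  obtain ⟨n, u, hu, hu0, he⟩ := hA.exists_eventuallyEq_pow_smul_nonzero_iff.2 hne
  simp only [sub_zero, smul_eq_mul] at he
  have hn : n ≠ 0 := by
    rintro rfl
    have := he.self_of_nhds
    simp [h0] at this
    exact hu0 this.symm
  obtain ⟨m, rfl⟩ := Nat.exists_eq_succ_of_ne_zero hn
  have hu1 := hu.deriv
  have hu2 := hu1.deriv
  have e1 : ∀ᶠ x in 𝓝 0, W1 x = ((m:ℂ)+1) * x^m * u x + x^(m+1) * deriv u x := by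
    filter_upwards [he.eventually_nhds, hW, hu.eventually_analyticAt] with x hx hWx hux
    have := ((hasDerivAt_pow (m+1) x).mul hux.differentiableAt.hasDerivAt)
    have h2 := (hWx.congr_of_eventuallyEq (EventuallyEq.symm hx)).unique this
    rw [h2]; push_cast; simp
  have e2 : ∀ᶠ x in 𝓝 0, W2 x = ((m:ℂ)+1) * (m * x^(m-1)) * u x + ((m:ℂ)+1) * x^m * deriv u x
      + (((m:ℂ)+1) * x^m * deriv u x + x^(m+1) * deriv (deriv u) x) := by
    filter_upwards [e1.eventually_nhds, hW1, hu.eventually_analyticAt,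
      hu1.eventually_analyticAt] with x hx hWx hux hu1x
    have := (((hasDerivAt_pow m x).const_mul ((m:ℂ)+1)).mul hux.differentiableAt.hasDerivAt).add
      ((hasDerivAt_pow (m+1) x).mul hu1x.differentiableAt.hasDerivAt)
    have h2 := (hWx.congr_of_eventuallyEq (EventuallyEq.symm hx)).unique this
    rw [h2]; push_cast; simp
  let B : ℂ → ℂ := fun x => ((m:ℂ)+1) * m * u x + 2 * ((m:ℂ)+1) * x * deriv u x
    + x^2 * deriv (deriv u) x + Q x * (((m:ℂ)+1) * u x + x * deriv u x) + x * R x * u x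
  have hB : ∀ᶠ x in 𝓝[≠] 0, B x = 0 := by
    filter_upwards [he.filter_mono nhdsWithin_le_nhds, e1.filter_mono nhdsWithin_le_nhds,
      e2.filter_mono nhdsWithin_le_nhds, hode.filter_mono nhdsWithin_le_nhds,
      self_mem_nhdsWithin] with x hx h1 h2 h3 hx0
    have hx0 : x ≠ 0 := hx0
    rw [hx, h1, h2] at h3
    have hm : (m:ℂ) * x^m = m * x^(m-1) * x := by
      rcases m with _ | m
      · simp
      · simp [pow_succ]; ring
    have : x^m * B x = 0 := by
      simp only [B]
      simp only [Nat.succ_eq_add_one] at h3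
      linear_combination h3 + ((m:ℂ)+1) * u x * hm
    exact (mul_eq_zero.1 this).resolve_left (pow_ne_zero _ hx0)
  have hBc : ContinuousAt B 0 := by
    have c0 := hu.continuousAt
    have c1 := hu1.continuousAt
    have c2 := hu2.continuousAt
    simp only [B]
    fun_prop
  have hB0 : B 0 = 0 := by
    have t1 : Tendsto B (𝓝[≠] 0) (𝓝 (B 0)) := hBc.tendsto.mono_left nhdsWithin_le_nhds
    have t2 : Tendsto B (𝓝[≠] 0) (𝓝 0) := tendsto_const_nhds.congr' (hB.mono fun x hx => hx.symm)
    exact tendsto_nhds_unique t1 t2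
  simp only [B, hQ0] at hB0
  have : ((m:ℂ)+1) * (4/3 + m) * u 0 = 0 := by linear_combination hB0
  have h3 := nat_add_ne m 1 one_pos
  have h4 := nat_add_ne m (4/3) (by norm_num)
  push_cast at h3 h4
  rw [add_comm] at h3
  exact mul_ne_zero (mul_ne_zero h3 h4) hu0 this

noncomputable def zz (x : ℂ) : ℂ := (x * (x + 4) ^ 3) / (4 * (2 * x - 1) ^ 3)
noncomputable def zz1 (x : ℂ) : ℂ := (x+4)^2 * (x^2-10*x-2) / (2 * (2*x-1)^4)
noncomputable def zz2 (x : ℂ) : ℂ := zz1 x * (2/(x+4) + (2*x-10)/(x^2-10*x-2) - 8/(2*x-1))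
noncomputable def QQ (x : ℂ) : ℂ := -x * (2/(x+4) + (2*x-10)/(x^2-10*x-2) - 8/(2*x-1))
  + (4/3 - 11/6 * zz x) * (-8 * (2*x-1)^2 / ((x+4)*(x^2-10*x-2)))
noncomputable def RR (x : ℂ) : ℂ := 7*(x+4)/(12*(2*x-1)^2)
noncomputable def gg (x : ℂ) : ℂ := 4 * (1 - 2*x) ^ (3/4 : ℂ) / (4 + x)
noncomputable def ll (x : ℂ) : ℂ := -(3/2)/(1-2*x) - 1/(4+x)
noncomputable def ll1 (x : ℂ) : ℂ := -3/(1-2*x)^2 + 1/(4+x)^2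

lemma zz_deriv (x : ℂ) (h2 : 2*x-1 ≠ 0) : HasDerivAt zz (zz1 x) x := by
  have hn := (hasDerivAt_id' x).mul (((hasDerivAt_id' x).add_const 4).pow 3)
  have hd := ((((hasDerivAt_id' x).const_mul 2).sub_const 1).pow 3).const_mul (4:ℂ)
  have := hn.div hd (by simpa using h2)
  refine HasDerivAt.congr_deriv this ?_
  simp only [zz1, Pi.mul_apply, Pi.pow_apply]
  generalize hs : 2*x-1 = s at *
  field_simp
  subst hs
  push_cast
  ring

lemma zz1_deriv (x : ℂ) (h4 : x+4 ≠ 0) (hp : x^2-10*x-2 ≠ 0) (h2 : 2*x-1 ≠ 0) :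
    HasDerivAt zz1 (zz2 x) x := by
  have hn := (((hasDerivAt_id' x).add_const 4).pow 2).mul
    ((((hasDerivAt_id' x).pow 2).sub ((hasDerivAt_id' x).const_mul 10)).sub_const 2)
  have hd := ((((hasDerivAt_id' x).const_mul 2).sub_const 1).pow 4).const_mul (2:ℂ)
  have := hn.div hd (by simpa using h2)
  refine HasDerivAt.congr_deriv this ?_
  simp only [zz2, zz1, Pi.mul_apply, Pi.pow_apply, Pi.sub_apply]
  generalize hs : 2*x-1 = s at *
  generalize hq : x^2-10*x-2 = p at *
  generalize ht : x+4 = t at *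
  field_simp
  subst hs hq ht
  push_cast
  ring

lemma gg_deriv (x : ℂ) (h4 : 4+x ≠ 0) (hs : 1-2*x ∈ Complex.slitPlane) :
    HasDerivAt gg (gg x * ll x) x := by
  have h1 : HasDerivAt (fun x : ℂ => 1 - 2*x) (-(2*1)) x :=
    ((hasDerivAt_id' x).const_mul (2:ℂ)).const_sub 1
  have h2 := ((h1.cpow_const (c := 3/4) hs).const_mul 4).div ((hasDerivAt_id' x).const_add 4) h4
  have hne : 1-2*x ≠ 0 := Complex.slitPlane_ne_zero hs
  refine HasDerivAt.congr_deriv h2 ?_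
  rw [Complex.cpow_sub _ _ hne, Complex.cpow_one]
  simp only [gg, ll]
  generalize (1 - 2*x)^(3/4:ℂ) = P
  generalize 1 - 2*x = s at *
  field_simp
  ring

lemma ll_deriv (x : ℂ) (h4 : 4+x ≠ 0) (hs : 1-2*x ≠ 0) : HasDerivAt ll (ll1 x) x := by
  have h1 : HasDerivAt (fun x : ℂ => 1 - 2*x) (-(2*1)) x :=
    ((hasDerivAt_id' x).const_mul (2:ℂ)).const_sub 1
  have := ((hasDerivAt_const x (-(3/2):ℂ)).div h1 hs).sub
    ((hasDerivAt_const x (1:ℂ)).div ((hasDerivAt_id' x).const_add 4) h4)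
  refine HasDerivAt.congr_deriv this ?_
  simp only [ll1]
  ring

lemma g_ode (x : ℂ) (h4 : x+4 ≠ 0) (hp : x^2-10*x-2 ≠ 0) (h2 : 2*x-1 ≠ 0) :
    x * (ll x * ll x + ll1 x) + QQ x * ll x + RR x = 0 := by
  have e1 : 1 - 2*x = -(2*x-1) := by ring
  have e2 : 4 + x = x + 4 := by ring
  simp only [ll, ll1, QQ, RR, zz, e1, e2]
  clear e1 e2
  generalize hs : 2*x-1 = s at *
  generalize hq : x^2-10*x-2 = p at *
  generalize ht : x+4 = t at *
  field_simp
  subst hs hq ht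
  ring

lemma G_ode (x f0 f1 f2 : ℂ) (h4 : x+4 ≠ 0) (hp : x^2-10*x-2 ≠ 0) (h2 : 2*x-1 ≠ 0)
    (h : zz x * (1 - zz x) * f2 + (4/3 - 11/6 * zz x) * f1 - 7/48 * f0 = 0) :
    x * (f2 * zz1 x * zz1 x + f1 * zz2 x) + QQ x * (f1 * zz1 x) + RR x * f0 = 0 := by
  have i1 : x * zz1 x * zz1 x = (-4*(x+4)/(2*x-1)^2) * (zz x * (1 - zz x)) := by
    clear h
    simp only [zz, zz1]
    generalize hs : 2*x-1 = s at *
    generalize hq : x^2-10*x-2 = p at *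
    generalize ht : x+4 = t at *
    field_simp
    subst hs hq ht
    ring
  have i2 : x * zz2 x + QQ x * zz1 x = (-4*(x+4)/(2*x-1)^2) * (4/3 - 11/6 * zz x) := by
    have : (-8 * (2*x-1)^2 / ((x+4)*(x^2-10*x-2))) * zz1 x = (-4*(x+4)/(2*x-1)^2) := by
      clear h i1
      simp only [zz1]
      generalize hs : 2*x-1 = s at *
      generalize hq : x^2-10*x-2 = p at *
      generalize ht : x+4 = t at *
      field_simp
      subst hs hq ht
      ring
    simp only [zz2, QQ]
    linear_combination (4/3 - 11/6 * zz x) * this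
  have i3 : RR x = (-4*(x+4)/(2*x-1)^2) * (-(7/48)) := by
    clear h i1 i2
    simp only [RR]
    generalize hs : 2*x-1 = s at *
    generalize hq : x^2-10*x-2 = p at *
    generalize ht : x+4 = t at *
    field_simp
    subst hs hq ht
    ring
  linear_combination f2 * i1 + f1 * i2 + f0 * i3 + (-4*(x+4)/(2*x-1)^2) * h

lemma main_ev : ∀ᶠ x : ℂ in 𝓝 0, F0 (zz x) = gg x ∧ 1-2*x ∈ Complex.slitPlane := by
  have a4 : ∀ᶠ x : ℂ in 𝓝 0, x + 4 ≠ 0 :=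
    (by fun_prop : ContinuousAt (fun x : ℂ => x + 4) 0).eventually_ne (by norm_num)
  have ap : ∀ᶠ x : ℂ in 𝓝 0, x^2-10*x-2 ≠ 0 :=
    (by fun_prop : ContinuousAt (fun x : ℂ => x^2-10*x-2) 0).eventually_ne (by norm_num)
  have a2 : ∀ᶠ x : ℂ in 𝓝 0, 2*x-1 ≠ 0 :=
    (by fun_prop : ContinuousAt (fun x : ℂ => 2*x-1) 0).eventually_ne (by norm_num)
  have as : ∀ᶠ x : ℂ in 𝓝 0, 1-2*x ∈ Complex.slitPlane :=
    (by fun_prop : ContinuousAt (fun x : ℂ => 1-2*x) 0).eventually_mem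
      (Complex.isOpen_slitPlane.mem_nhds (by simp))
  have cz : ContinuousAt zz 0 := (zz_deriv 0 (by norm_num)).continuousAt
  have z0 : zz 0 = 0 := by simp [zz]
  have az : ∀ᶠ x : ℂ in 𝓝 0, ‖zz x‖ < 1 := by
    apply (cz.norm).eventually_lt_const
    simp [z0]
  have key := ode_unique (fun x => F0 (zz x) - gg x) (fun x => F1 (zz x) * zz1 x - gg x * ll x)
    (fun x => (F2 (zz x) * zz1 x * zz1 x + F1 (zz x) * zz2 x) - (gg x * ll x * ll x + gg x * ll1 x))
    QQ RR ?_ ?_ ?_ ?_ ?_ ?_ ?_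
  · filter_upwards [key, as] with x hx hs
    exact ⟨sub_eq_zero.1 hx, hs⟩
  · filter_upwards [a4, a2, as, az] with x h4 h2 hs hz
    exact ((F0_deriv _ hz).comp x (zz_deriv x h2)).sub (gg_deriv x (by rwa [add_comm]) hs)
  · filter_upwards [a4, ap, a2, as, az] with x h4 hp h2 hs hz
    have h4' : 4 + x ≠ 0 := by rwa [add_comm]
    exact (((F1_deriv _ hz).comp x (zz_deriv x h2)).mul (zz1_deriv x h4 hp h2)).sub
      ((gg_deriv x h4' hs).mul (ll_deriv x h4' (Complex.slitPlane_ne_zero hs)))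
  · unfold QQ
    fun_prop (disch := norm_num)
  · unfold RR
    fun_prop (disch := norm_num)
  · simp only [QQ, z0]; norm_num
  · simp only [z0, gg]
    have : F0 0 = 1 := by
      unfold F0
      rw [tsum_eq_single 0 (fun k hk => by simp [hk])]
      simp [cc, poch]
    rw [this]; simp
  · filter_upwards [a4, ap, a2, az] with x h4 hp h2 hz
    have hG := G_ode x _ _ _ h4 hp h2 (F_ode _ hz)
    have hg := g_ode x h4 hp h2
    linear_combination hG - gg x * hg

theorem statement10 : ∃ δ > (0 : ℝ), ∀ x : ℝ, |x| < δ →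
    hypF [1/4, 7/12] [4/3]
        (((x : ℂ) * ((x : ℂ) + 4) ^ 3) / (4 * (2 * (x : ℂ) - 1) ^ 3))
      = ((4 * (1 - 2 * x) ^ ((3 : ℝ)/4) / (4 + x) : ℝ) : ℂ) := by
  obtain ⟨δ, hδ, h⟩ := Metric.eventually_nhds_iff.1 main_ev
  refine ⟨δ, hδ, fun x hx => ?_⟩
  obtain ⟨h1, hs⟩ := h (y := (x:ℂ)) (by simpa using hx)
  have hpos : 0 ≤ 1 - 2*x := by
    have : ((1 - 2*x : ℝ) : ℂ) ∈ Complex.slitPlane := by push_cast; exact hs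
    exact (Complex.ofReal_mem_slitPlane.1 this).le
  have h2 : hypF [1/4, 7/12] [4/3]
        (((x : ℂ) * ((x : ℂ) + 4) ^ 3) / (4 * (2 * (x : ℂ) - 1) ^ 3)) = F0 (zz x) := by
    simp [hypF, F0, cc, zz]
  rw [h2, h1, gg]
  push_cast [Complex.ofReal_cpow hpos]
  rfl
end
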